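/- Let G be a group, k a field of characteristic 0, and V, W finite-dimensional semisimple k-linear representations of G. Then the tensor product representation V ⊗ W is semisimple. -/

import Mathlib

/-!
Over `ℂ`, call finitely many invertible operators `s a` on a Hermitian space log-balanced if
`∑ log |s a| = ∑ log |(s a)*|`. This condition is inherited by tensor products and orthogonal
sums. If `L` is invariant, then Jensen's inequality for `exp` gives
`tr_L (log |s a|) ≤ log |det (s a|L)| ≤ tr_L (log |(s a)*|)` for the compressions to `L`; summing
over `a` forces equality, and the equality case makes the orthogonal complement of `L` invariant.
So log-balanced families are semisimple. Conversely, irreducible families are log-balanced for a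
suitable inner product, namely the one which minimises `∑ ‖log |h (s a) h⁻¹|‖²` over invertible `h`
(a harmonic metric): along a minimising sequence with `‖h‖ = 1` the kernel of the limit is
invariant, hence zero, and the derivative along `exp (t Z) h` is the pairing of `Z` with the defect
in the log-balance condition.

Over a field of characteristic zero, semisimplicity amounts to nondegeneracy of the trace form on
the span of the image. This does not change under field extensions and involves only finitely many
group elements, so the matrix entries may be taken in a countable field, which embeds in `ℂ`.
-/

open Module Filter Topology
open scoped InnerProductSpace TensorProduct Kronecker

namespace Chevalley

section DiagonalOperator

variable {𝕜 E ι : Type*} [RCLike 𝕜] [NormedAddCommGroup E] [InnerProductSpace 𝕜 E] [Fintype ι]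

/-- The self-adjoint operator with orthonormal eigenbasis `b` and eigenvalues `x`. -/
noncomputable def diagonalOperator (b : OrthonormalBasis ι 𝕜 E) (x : ι → ℝ) : E →ₗ[𝕜] E :=
  b.toBasis.constr 𝕜 fun i ↦ (x i : 𝕜) • b i

variable (b : OrthonormalBasis ι 𝕜 E) (x : ι → ℝ)

@[simp]
lemma diagonalOperator_apply_self (i : ι) : diagonalOperator b x (b i) = (x i : 𝕜) • b i := by
  rw [diagonalOperator, ← b.coe_toBasis, Basis.constr_basis]

lemma diagonalOperator_apply (v : E) :
    diagonalOperator b x v = ∑ i, ((x i : 𝕜) * ⟪b i, v⟫_𝕜) • b i := by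
  conv_lhs => rw [← b.sum_repr' v]
  simp [smul_smul, mul_comm]

lemma diagonalOperator_isSymmetric : (diagonalOperator b x).IsSymmetric := by
  intro v w
  simp only [diagonalOperator_apply, sum_inner, inner_sum, inner_smul_left, inner_smul_right,
    map_mul, RCLike.conj_ofReal, inner_conj_symm]
  exact Finset.sum_congr rfl fun i _ ↦ by ring

lemma diagonalOperator_neg : diagonalOperator b (-x) = -diagonalOperator b x :=
  b.toBasis.ext fun i ↦ by simp

lemma re_inner_diagonalOperator (v : E) :
    RCLike.re ⟪v, diagonalOperator b x v⟫_𝕜 = ∑ i, ‖⟪b i, v⟫_𝕜‖ ^ 2 * x i := by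
  simp only [diagonalOperator_apply, inner_sum, inner_smul_right, map_sum]
  refine Finset.sum_congr rfl fun i _ ↦ ?_
  rw [mul_assoc, RCLike.re_ofReal_mul, inner_mul_symm_re_eq_norm, norm_mul, norm_inner_symm v,
    sq, mul_comm]

end DiagonalOperator

section LogSVD

variable {𝕜 E : Type*} [RCLike 𝕜] [NormedAddCommGroup E] [InnerProductSpace 𝕜 E]

/-- A singular value decomposition of an invertible operator `s`, the singular values being
recorded through their logarithms `exponent`. The index type is a field, so that decompositions
of tensor products and direct sums need no reindexing. -/
structure LogSVD (s : E →ₗ[𝕜] E) where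
  index : Type
  [fintypeIndex : Fintype index]
  source : OrthonormalBasis index 𝕜 E
  target : OrthonormalBasis index 𝕜 E
  exponent : index → ℝ
  map_source : ∀ i, s (source i) = (Real.exp (exponent i) : 𝕜) • target i

attribute [instance] LogSVD.fintypeIndex

variable {s : E →ₗ[𝕜] E}

lemma nonempty_logSVD_of_injective [FiniteDimensional 𝕜 E] (hs : Function.Injective s) :
    Nonempty (LogSVD s) := by
  have hT : (s.adjoint ∘ₗ s).IsSymmetric := s.isSymmetric_adjoint_mul_self
  let e := hT.eigenvectorBasis rfl
  have inner_map (i j) : ⟪s (e i), s (e j)⟫_𝕜 = (hT.eigenvalues rfl j : 𝕜) * ⟪e i, e j⟫_𝕜 := by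
    rw [← LinearMap.adjoint_inner_right, ← LinearMap.comp_apply, hT.apply_eigenvectorBasis rfl j,
      inner_smul_right]
  have norm_pos (i) : 0 < ‖s (e i)‖ := by
    rw [norm_pos_iff, map_ne_zero_iff s hs]
    exact e.orthonormal.ne_zero i
  let f (i) : E := ((‖s (e i)‖⁻¹ : ℝ) : 𝕜) • s (e i)
  have hf : Orthonormal 𝕜 f := by
    refine ⟨fun i ↦ ?_, fun i j hij ↦ ?_⟩
    · simp [f, norm_smul, (norm_pos i).ne']
    · simp [f, inner_smul_left, inner_smul_right, inner_map, e.orthonormal.2 hij]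
  have hspan : ⊤ ≤ Submodule.span 𝕜 (Set.range f) :=
    (hf.linearIndependent.span_eq_top_of_card_eq_finrank' (by simp)).ge
  refine ⟨⟨_, e, .mk hf hspan, fun i ↦ Real.log ‖s (e i)‖, fun i ↦ ?_⟩⟩
  have : (‖s (e i)‖ : 𝕜) ≠ 0 := by exact_mod_cast (norm_pos i).ne'
  simp [f, Real.exp_log (norm_pos i), smul_smul, this]

namespace LogSVD

variable (D : LogSVD s)

/-- The logarithm of `|s| = √(s* s)`. -/
noncomputable def logSource : E →ₗ[𝕜] E := diagonalOperator D.source D.exponent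

/-- The logarithm of `|s*| = √(s s*)`. -/
noncomputable def logTarget : E →ₗ[𝕜] E := diagonalOperator D.target D.exponent

/-- The decomposition of the inverse. -/
noncomputable def inv {t : E →ₗ[𝕜] E} (hts : t ∘ₗ s = LinearMap.id) : LogSVD t where
  index := D.index
  source := D.target
  target := D.source
  exponent := -D.exponent
  map_source i := by
    have h := LinearMap.congr_fun hts (D.source i)
    rw [LinearMap.comp_apply, D.map_source, map_smul, LinearMap.id_apply] at h
    rw [← h, smul_smul, ← RCLike.ofReal_mul, ← Real.exp_add]
    simp

lemma inner_target_map (i : D.index) (v : E) :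
    ⟪D.target i, s v⟫_𝕜 = Real.exp (D.exponent i) * ⟪D.source i, v⟫_𝕜 := by
  classical
  conv_lhs => rw [← D.source.sum_repr' v]
  simp [inner_sum, inner_smul_right, D.map_source, D.target.inner_eq_ite, mul_comm]

lemma inner_map_map (v w : E) :
    ⟪s v, s w⟫_𝕜 =
      ∑ i, (Real.exp (2 * D.exponent i) : 𝕜) * (⟪v, D.source i⟫_𝕜 * ⟪D.source i, w⟫_𝕜) := by
  rw [← D.target.sum_inner_mul_inner]
  refine Finset.sum_congr rfl fun i _ ↦ ?_
  rw [← inner_conj_symm, D.inner_target_map, D.inner_target_map, map_mul, inner_conj_symm,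
    RCLike.conj_ofReal, two_mul, Real.exp_add]
  push_cast
  ring

lemma norm_map_sq (v : E) :
    ‖s v‖ ^ 2 = ∑ i, ‖⟪D.source i, v⟫_𝕜‖ ^ 2 * Real.exp (2 * D.exponent i) := by
  rw [← D.target.sum_sq_norm_inner_right]
  refine Finset.sum_congr rfl fun i _ ↦ ?_
  rw [D.inner_target_map, norm_mul, mul_pow, RCLike.norm_ofReal, sq_abs, ← Real.exp_nat_mul,
    mul_comm, Nat.cast_ofNat]

lemma norm_map_source (i : D.index) : ‖s (D.source i)‖ = Real.exp (D.exponent i) := by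
  simp [D.map_source, norm_smul]

lemma injective (D : LogSVD s) : Function.Injective s := by
  refine (injective_iff_map_eq_zero s).2 fun v hv ↦ D.source.toBasis.ext_elem fun i ↦ ?_
  have h := D.inner_target_map i v
  rw [hv, inner_zero_right, eq_comm, mul_eq_zero] at h
  simpa [Real.exp_ne_zero, D.source.repr_apply_apply] using h

lemma two_mul_re_inner_logSource (v : E) :
    2 * RCLike.re ⟪v, D.logSource v⟫_𝕜 =
      ∑ i, ‖⟪D.source i, v⟫_𝕜‖ ^ 2 • (2 * D.exponent i) := by
  rw [logSource, re_inner_diagonalOperator, Finset.mul_sum]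
  simp only [smul_eq_mul, mul_left_comm]

lemma re_inner_logSource_le {v : E} (hv : ‖v‖ = 1) :
    RCLike.re ⟪v, D.logSource v⟫_𝕜 ≤ Real.log ‖s v‖ := by
  have hsv : 0 < ‖s v‖ := by
    rw [norm_pos_iff, map_ne_zero_iff s D.injective, ← norm_pos_iff, hv]
    exact one_pos
  suffices 2 * RCLike.re ⟪v, D.logSource v⟫_𝕜 ≤ Real.log (‖s v‖ ^ 2) by
    simpa [Real.log_pow] using this
  rw [Real.le_log_iff_exp_le (by positivity), two_mul_re_inner_logSource, D.norm_map_sq]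
  exact convexOn_exp.map_sum_le (fun _ _ ↦ by positivity)
    (by simp [D.source.sum_sq_norm_inner_right, hv]) (by simp)

/-- The equality case of `re_inner_logSource_le`: the vector `v` is then an eigenvector of
`s* s`. -/
lemma inner_map_map_of_re_inner_logSource_eq {v : E} (hv : ‖v‖ = 1)
    (h : RCLike.re ⟪v, D.logSource v⟫_𝕜 = Real.log ‖s v‖) (w : E) :
    ⟪s v, s w⟫_𝕜 = (‖s v‖ : 𝕜) ^ 2 * ⟪v, w⟫_𝕜 := by
  have hsv : 0 < ‖s v‖ := by
    rw [norm_pos_iff, map_ne_zero_iff s D.injective, ← norm_pos_iff, hv]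
    exact one_pos
  have hexp : Real.exp (2 * RCLike.re ⟪v, D.logSource v⟫_𝕜) = ‖s v‖ ^ 2 := by
    rw [h, ← Nat.cast_ofNat, Real.exp_nat_mul, Real.exp_log hsv]
  have exponent_eq (i) (hi : ‖⟪D.source i, v⟫_𝕜‖ ^ 2 ≠ 0) :
      2 * D.exponent i = 2 * RCLike.re ⟪v, D.logSource v⟫_𝕜 := by
    rw [two_mul_re_inner_logSource] at hexp ⊢
    rw [D.norm_map_sq] at hexp
    exact (strictConvexOn_exp.map_sum_eq_iff' (fun _ _ ↦ by positivity)
      (by simp [D.source.sum_sq_norm_inner_right, hv]) (by simp)).1 hexp i (Finset.mem_univ i) hi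
  rw [D.inner_map_map, ← D.source.sum_inner_mul_inner v w, Finset.mul_sum, ← RCLike.ofReal_pow,
    ← hexp]
  refine Finset.sum_congr rfl fun i _ ↦ ?_
  by_cases hi : ⟪D.source i, v⟫_𝕜 = 0
  · simp [inner_eq_zero_symm.1 hi]
  · rw [exponent_eq i (by simpa using hi)]

lemma le_re_inner_logTarget {v w : E} (hv : ‖v‖ = 1) (hw : ‖w‖ = 1) {r : ℝ}
    (h : s v = (Real.exp r : 𝕜) • w) : r ≤ RCLike.re ⟪w, D.logTarget w⟫_𝕜 := by
  obtain ⟨t, hts⟩ := s.exists_leftInverse_of_injective (LinearMap.ker_eq_bot.2 D.injective)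
  have htw : t w = (Real.exp (-r) : 𝕜) • v := by
    have := LinearMap.congr_fun hts v
    rw [LinearMap.comp_apply, h, map_smul, LinearMap.id_apply] at this
    rw [← this, smul_smul, ← RCLike.ofReal_mul, ← Real.exp_add]
    simp
  have hle := (D.inv hts).re_inner_logSource_le hw
  have hneg : (D.inv hts).logSource = -D.logTarget := diagonalOperator_neg _ _
  simpa [hneg, htw, norm_smul, hv] using hle

end LogSVD

end LogSVD

section LogBalanced

variable {𝕜 E κ : Type*} [RCLike 𝕜] [NormedAddCommGroup E] [InnerProductSpace 𝕜 E] [Fintype κ]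

/-- The real part of the trace of the compression of an operator to `L`. -/
noncomputable def compressionTrace (L : Submodule 𝕜 E) [L.HasOrthogonalProjection] :
    (E →ₗ[𝕜] E) →+ ℝ where
  toFun X := RCLike.re
    (LinearMap.trace 𝕜 L (L.orthogonalProjectionOnto.toLinearMap ∘ₗ X ∘ₗ L.subtype))
  map_zero' := by simp
  map_add' X Y := by simp [LinearMap.add_comp, LinearMap.comp_add]

lemma compressionTrace_eq_sum {ι : Type*} [Fintype ι] (L : Submodule 𝕜 E)
    [L.HasOrthogonalProjection] (b : OrthonormalBasis ι 𝕜 L) (X : E →ₗ[𝕜] E) :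
    compressionTrace L X = ∑ i, RCLike.re ⟪(b i : E), X (b i)⟫_𝕜 := by
  classical
  simp [compressionTrace, LinearMap.trace_eq_sum_inner _ b]

namespace LogSVD

variable {s : E →ₗ[𝕜] E} (D : LogSVD s) {L : Submodule 𝕜 E} {hL : ∀ v ∈ L, s v ∈ L}
  (D' : LogSVD (s.restrict hL))

lemma map_source_restrict (j : D'.index) :
    s (D'.source j) = (Real.exp (D'.exponent j) : 𝕜) • (D'.target j : E) :=
  congrArg Subtype.val (D'.map_source j)

lemma norm_map_source_restrict (j : D'.index) :
    ‖s (D'.source j)‖ = Real.exp (D'.exponent j) :=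
  D'.norm_map_source j

lemma re_inner_logSource_restrict_le (j : D'.index) :
    RCLike.re ⟪(D'.source j : E), D.logSource (D'.source j)⟫_𝕜 ≤ D'.exponent j := by
  simpa [D'.norm_map_source_restrict] using
    D.re_inner_logSource_le (v := D'.source j) (D'.source.norm_eq_one j)

variable [L.HasOrthogonalProjection]

lemma compressionTrace_logSource_le : compressionTrace L D.logSource ≤ ∑ j, D'.exponent j := by
  rw [compressionTrace_eq_sum L D'.source]
  exact Finset.sum_le_sum fun j _ ↦ D.re_inner_logSource_restrict_le D' j

lemma le_compressionTrace_logTarget : ∑ j, D'.exponent j ≤ compressionTrace L D.logTarget := by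
  rw [compressionTrace_eq_sum L D'.target]
  exact Finset.sum_le_sum fun j _ ↦ D.le_re_inner_logTarget (D'.source.norm_eq_one j)
    (D'.target.norm_eq_one j) (D'.map_source_restrict j)

lemma map_mem_orthogonal (h : compressionTrace L D.logSource = ∑ j, D'.exponent j) {w : E}
    (hw : w ∈ Lᗮ) : s w ∈ Lᗮ := by
  rw [compressionTrace_eq_sum L D'.source, Finset.sum_eq_sum_iff_of_le
    fun j _ ↦ D.re_inner_logSource_restrict_le D' j] at h
  have inner_target (j) : ⟪(D'.target j : E), s w⟫_𝕜 = 0 := by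
    have := D.inner_map_map_of_re_inner_logSource_eq (v := D'.source j)
      (D'.source.norm_eq_one j)
      ((h j (Finset.mem_univ j)).trans (by simp [D'.norm_map_source_restrict])) w
    rw [Submodule.inner_right_of_mem_orthogonal (D'.source j).2 hw, mul_zero,
      D'.map_source_restrict, inner_smul_left, mul_eq_zero] at this
    simpa [Real.exp_ne_zero] using this
  refine (L.mem_orthogonal _).2 fun u hu ↦ ?_
  have := congrArg Subtype.val (D'.target.sum_repr ⟨u, hu⟩)
  simp only [Submodule.coe_sum, Submodule.coe_smul] at this
  rw [← this, sum_inner]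
  exact Finset.sum_eq_zero fun j _ ↦ by rw [inner_smul_left, inner_target, mul_zero]

end LogSVD

/-- A finite family of invertible operators is log-balanced if `∑ log |s a| = ∑ log |(s a)*|`;
the two sums do not depend on the choice of the decompositions. -/
def IsLogBalanced (s : κ → E →ₗ[𝕜] E) : Prop :=
  ∃ D : ∀ a, LogSVD (s a), ∑ a, (D a).logSource = ∑ a, (D a).logTarget

lemma IsLogBalanced.map_mem_orthogonal [FiniteDimensional 𝕜 E] {s : κ → E →ₗ[𝕜] E}
    (hs : IsLogBalanced s) {L : Submodule 𝕜 E} (hL : ∀ a, ∀ v ∈ L, s a v ∈ L) (a : κ) {w : E}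
    (hw : w ∈ Lᗮ) : s a w ∈ Lᗮ := by
  obtain ⟨D, hD⟩ := hs
  have D' (a) : LogSVD ((s a).restrict (hL a)) := Nonempty.some <|
    nonempty_logSVD_of_injective fun v w h ↦
      Subtype.ext ((D a).injective (congrArg Subtype.val h))
  have hsum :
      ∑ a, compressionTrace L (D a).logSource = ∑ a, compressionTrace L (D a).logTarget := by
    rw [← map_sum, hD, map_sum]
  have heq := (Finset.sum_eq_sum_iff_of_le fun a _ ↦
    ((D a).compressionTrace_logSource_le (D' a)).trans
      ((D a).le_compressionTrace_logTarget (D' a))).1 hsum a (Finset.mem_univ a)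
  exact (D a).map_mem_orthogonal (D' a) (((D a).compressionTrace_logSource_le (D' a)).antisymm
    (((D a).le_compressionTrace_logTarget (D' a)).trans heq.ge)) hw

end LogBalanced

section TensorAndDirectSum

variable {𝕜 E F κ : Type*} [RCLike 𝕜] [NormedAddCommGroup E] [InnerProductSpace 𝕜 E]
  [NormedAddCommGroup F] [InnerProductSpace 𝕜 F] [Fintype κ]

lemma diagonalOperator_tensorProduct {ι ι' : Type*} [Fintype ι] [Fintype ι']
    (b : OrthonormalBasis ι 𝕜 E) (b' : OrthonormalBasis ι' 𝕜 F) (x : ι → ℝ) (x' : ι' → ℝ) :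
    diagonalOperator (b.tensorProduct b') (fun i ↦ x i.1 + x' i.2) =
      (diagonalOperator b x).rTensor F + (diagonalOperator b' x').lTensor E := by
  refine (b.tensorProduct b').toBasis.ext fun i ↦ ?_
  rw [OrthonormalBasis.coe_toBasis, diagonalOperator_apply_self]
  simp [OrthonormalBasis.tensorProduct_apply', add_smul, TensorProduct.smul_tmul']

lemma diagonalOperator_prod {ι ι' : Type*} [Fintype ι] [Fintype ι']
    (b : OrthonormalBasis ι 𝕜 E) (b' : OrthonormalBasis ι' 𝕜 F) (x : ι → ℝ) (x' : ι' → ℝ) :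
    diagonalOperator (b.prod b') (Sum.elim x x') = (WithLp.linearEquiv 2 𝕜 (E × F)).symm.conj
      ((diagonalOperator b x).prodMap (diagonalOperator b' x')) := by
  refine (b.prod b').toBasis.ext fun i ↦ ?_
  rw [OrthonormalBasis.coe_toBasis, diagonalOperator_apply_self]
  cases i <;> simp [LinearEquiv.conj_apply, ← WithLp.toLp_smul]

namespace LogSVD

variable {s : E →ₗ[𝕜] E} {t : F →ₗ[𝕜] F} (D : LogSVD s) (D' : LogSVD t)

/-- The decomposition of a tensor product; the logarithms add up. -/
noncomputable def tensor : LogSVD (TensorProduct.map s t) where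
  index := D.index × D'.index
  source := D.source.tensorProduct D'.source
  target := D.target.tensorProduct D'.target
  exponent i := D.exponent i.1 + D'.exponent i.2
  map_source i := by
    rw [OrthonormalBasis.tensorProduct_apply', TensorProduct.map_tmul, D.map_source, D'.map_source,
      TensorProduct.smul_tmul_smul, OrthonormalBasis.tensorProduct_apply', Real.exp_add,
      RCLike.ofReal_mul]

/-- The decomposition of an orthogonal direct sum. -/
noncomputable def prod :
    LogSVD ((WithLp.linearEquiv 2 𝕜 (E × F)).symm.conj (s.prodMap t)) where
  index := D.index ⊕ D'.index
  source := D.source.prod D'.source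
  target := D.target.prod D'.target
  exponent := Sum.elim D.exponent D'.exponent
  map_source i := by
    cases i <;> simp [LinearEquiv.conj_apply, D.map_source, D'.map_source, ← WithLp.toLp_smul]

end LogSVD

lemma IsLogBalanced.tensor {s : κ → E →ₗ[𝕜] E} {t : κ → F →ₗ[𝕜] F} (hs : IsLogBalanced s)
    (ht : IsLogBalanced t) : IsLogBalanced fun a ↦ TensorProduct.map (s a) (t a) := by
  obtain ⟨D, hD⟩ := hs
  obtain ⟨D', hD'⟩ := ht
  have hD := congrArg (LinearMap.rTensorHom F) hD
  have hD' := congrArg (LinearMap.lTensorHom E) hD'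
  simp only [map_sum, LinearMap.coe_rTensorHom, LinearMap.coe_lTensorHom] at hD hD'
  refine ⟨fun a ↦ (D a).tensor (D' a), ?_⟩
  calc ∑ a, ((D a).tensor (D' a)).logSource
      = ∑ a, ((D a).logSource.rTensor F + (D' a).logSource.lTensor E) :=
        Finset.sum_congr rfl fun a _ ↦ diagonalOperator_tensorProduct ..
    _ = ∑ a, ((D a).logTarget.rTensor F + (D' a).logTarget.lTensor E) := by
        rw [Finset.sum_add_distrib, hD, hD', Finset.sum_add_distrib]
    _ = ∑ a, ((D a).tensor (D' a)).logTarget :=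
        Finset.sum_congr rfl fun a _ ↦ (diagonalOperator_tensorProduct ..).symm

lemma IsLogBalanced.prod {s : κ → E →ₗ[𝕜] E} {t : κ → F →ₗ[𝕜] F} (hs : IsLogBalanced s)
    (ht : IsLogBalanced t) :
    IsLogBalanced fun a ↦ (WithLp.linearEquiv 2 𝕜 (E × F)).symm.conj ((s a).prodMap (t a)) := by
  obtain ⟨D, hD⟩ := hs
  obtain ⟨D', hD'⟩ := ht
  refine ⟨fun a ↦ (D a).prod (D' a), ?_⟩
  have sum_conj_prodMap (X : κ → E →ₗ[𝕜] E) (Y : κ → F →ₗ[𝕜] F) :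
      ∑ a, (WithLp.linearEquiv 2 𝕜 (E × F)).symm.conj ((X a).prodMap (Y a)) =
        (WithLp.linearEquiv 2 𝕜 (E × F)).symm.conj ((∑ a, X a).prodMap (∑ a, Y a)) := by
    rw [← map_sum]
    congr 1
    ext <;> simp [Prod.fst_sum, Prod.snd_sum]
  calc ∑ a, ((D a).prod (D' a)).logSource
      = ∑ a, (WithLp.linearEquiv 2 𝕜 (E × F)).symm.conj
          ((D a).logSource.prodMap (D' a).logSource) :=
        Finset.sum_congr rfl fun a _ ↦ diagonalOperator_prod ..
    _ = ∑ a, (WithLp.linearEquiv 2 𝕜 (E × F)).symm.conj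
          ((D a).logTarget.prodMap (D' a).logTarget) := by
        rw [sum_conj_prodMap, hD, hD', sum_conj_prodMap]
    _ = ∑ a, ((D a).prod (D' a)).logTarget :=
        Finset.sum_congr rfl fun a _ ↦ (diagonalOperator_prod ..).symm

end TensorAndDirectSum

section ScalarInequalities

lemma sq_le_sq_exp_sub_one_div_exp (d : ℝ) :
    d ^ 2 ≤ (Real.exp (2 * d) - 1) ^ 2 * Real.exp (-(2 * d)) := by
  have hsinh : d ^ 2 ≤ Real.sinh d ^ 2 := by
    rw [sq_le_sq, Real.abs_sinh]
    exact Real.self_le_sinh_iff.2 (abs_nonneg d)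
  have hexp : (Real.exp (2 * d) - 1) ^ 2 * Real.exp (-(2 * d)) = 4 * Real.sinh d ^ 2 := by
    have h : Real.exp d * Real.exp (-d) = 1 := by simp [← Real.exp_add]
    rw [Real.sinh_eq, show -(2 * d) = -d + -d by ring, show 2 * d = d + d by ring, Real.exp_add,
      Real.exp_add]
    grind
  nlinarith [sq_nonneg (Real.sinh d)]

lemma exp_sub_one_sub_le_sq_div_exp (d : ℝ) :
    Real.exp d - 1 - d ≤ (Real.exp d - 1) ^ 2 * Real.exp (-d) := by
  have h : Real.exp d * Real.exp (-d) = 1 := by simp [← Real.exp_add]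
  calc Real.exp d - 1 - d ≤ Real.exp d - 2 + Real.exp (-d) := by
        linarith [Real.add_one_le_exp (-d)]
    _ = (Real.exp d - 1) ^ 2 * Real.exp (-d) := by
        linear_combination (2 - Real.exp d) * h

/-- A second order Taylor bound for `y ^ 2` as a function of `exp (2 * y)`. -/
lemma sq_le_sq_add_mul_exp_sub_exp {R x y : ℝ} (hR : 0 ≤ R) (hx : -R ≤ x) (hy : -R ≤ y) :
    y ^ 2 ≤ x ^ 2 + x * Real.exp (-(2 * x)) * (Real.exp (2 * y) - Real.exp (2 * x)) +
      (1 + R) * Real.exp (4 * R) * (Real.exp (2 * y) - Real.exp (2 * x)) ^ 2 := by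
  obtain ⟨d, rfl⟩ : ∃ d, y = x + d := ⟨y - x, by ring⟩
  set u := Real.exp (2 * d) - 1 with hu
  have hsub : Real.exp (2 * (x + d)) - Real.exp (2 * x) = Real.exp (2 * x) * u := by
    rw [mul_add, Real.exp_add, hu]
    ring
  have hfirst : x * Real.exp (-(2 * x)) * (Real.exp (2 * x) * u) = x * u := by
    have : Real.exp (-(2 * x)) * Real.exp (2 * x) = 1 := by simp [← Real.exp_add]
    linear_combination x * u * this
  have hsecond : u ^ 2 * Real.exp (-(2 * d)) ≤ Real.exp (4 * R) * (Real.exp (2 * x) * u) ^ 2 := by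
    have : Real.exp (-(2 * d)) ≤ Real.exp (4 * R) * Real.exp (2 * x) ^ 2 := by
      rw [← Real.exp_nat_mul, ← Real.exp_add, Real.exp_le_exp]
      push_cast
      linarith
    rw [mul_pow, ← mul_assoc, mul_comm (u ^ 2)]
    exact mul_le_mul_of_nonneg_right this (sq_nonneg u)
  have hquad := sq_le_sq_exp_sub_one_div_exp d
  have hlin := exp_sub_one_sub_le_sq_div_exp (2 * d)
  have hu_nonneg : 0 ≤ u - 2 * d := by linarith [Real.add_one_le_exp (2 * d)]
  rw [hsub, hfirst]
  rw [← hu] at hquad hlin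
  set Q := Real.exp (4 * R) * (Real.exp (2 * x) * u) ^ 2
  have : -x * (u - 2 * d) ≤ R * Q :=
    mul_le_mul (by linarith) (hlin.trans hsecond) hu_nonneg hR
  linarith

end ScalarInequalities

section Energy

variable {𝕜 E : Type*} [RCLike 𝕜] [NormedAddCommGroup E] [InnerProductSpace 𝕜 E]

namespace LogSVD

variable {s s' : E →ₗ[𝕜] E} (D : LogSVD s) (D' : LogSVD s')

/-- The squared Hilbert–Schmidt norm of `log |s|`. -/
def energy : ℝ := ∑ i, D.exponent i ^ 2

lemma adjoint_comp_self [FiniteDimensional 𝕜 E] :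
    s.adjoint ∘ₗ s = diagonalOperator D.source fun i ↦ Real.exp (2 * D.exponent i) := by
  refine LinearMap.ext fun w ↦ ext_inner_left 𝕜 fun v ↦ ?_
  rw [LinearMap.comp_apply, LinearMap.adjoint_inner_right, D.inner_map_map,
    diagonalOperator_apply, inner_sum]
  exact Finset.sum_congr rfl fun i _ ↦ by rw [inner_smul_right]; ring

lemma energy_eq_sum_sum :
    D'.energy = ∑ j, ∑ i, ‖⟪D'.source i, D.source j⟫_𝕜‖ ^ 2 * D'.exponent i ^ 2 := by
  rw [Finset.sum_comm, energy]
  simp [← Finset.sum_mul, D.source.sum_sq_norm_inner_left]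

lemma norm_sq_gram_sub_source [FiniteDimensional 𝕜 E] (j : D.index) :
    ‖(s'.adjoint ∘ₗ s' - s.adjoint ∘ₗ s) (D.source j)‖ ^ 2 =
      ∑ i, ‖⟪D'.source i, D.source j⟫_𝕜‖ ^ 2 *
        (Real.exp (2 * D'.exponent i) - Real.exp (2 * D.exponent j)) ^ 2 := by
  rw [← D'.source.sum_sq_norm_inner_right]
  refine Finset.sum_congr rfl fun i _ ↦ ?_
  rw [D.adjoint_comp_self, D'.adjoint_comp_self, LinearMap.sub_apply, inner_sub_right,
    ← diagonalOperator_isSymmetric, diagonalOperator_apply_self, diagonalOperator_apply_self,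
    inner_smul_left, inner_smul_right, RCLike.conj_ofReal, ← sub_mul, ← RCLike.ofReal_sub, norm_mul,
    RCLike.norm_ofReal, mul_pow, sq_abs, mul_comm]

/-- First order expansion of the energy of `s'` around `s`, with a one-sided quadratic remainder. -/
lemma energy_le [FiniteDimensional 𝕜 E] {R : ℝ} (hR : 0 ≤ R) (hD : ∀ j, -R ≤ D.exponent j)
    (hD' : ∀ i, -R ≤ D'.exponent i) :
    D'.energy ≤ D.energy +
      ∑ j, (D.exponent j * Real.exp (-(2 * D.exponent j)) *
          (‖s' (D.source j)‖ ^ 2 - ‖s (D.source j)‖ ^ 2) +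
        (1 + R) * Real.exp (4 * R) *
          ‖(s'.adjoint ∘ₗ s' - s.adjoint ∘ₗ s) (D.source j)‖ ^ 2) := by
  have hsource (j) : ‖s (D.source j)‖ ^ 2 =
      ∑ i, ‖⟪D'.source i, D.source j⟫_𝕜‖ ^ 2 * Real.exp (2 * D.exponent j) := by
    rw [← Finset.sum_mul, D'.source.sum_sq_norm_inner_right, D.source.norm_eq_one,
      D.norm_map_source, ← Real.exp_nat_mul]
    simp
  rw [D.energy_eq_sum_sum D', energy, ← Finset.sum_add_distrib]
  refine Finset.sum_le_sum fun j _ ↦ ?_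
  have hone : ∑ i, ‖⟪D'.source i, D.source j⟫_𝕜‖ ^ 2 = 1 := by
    simp [D'.source.sum_sq_norm_inner_right]
  calc ∑ i, ‖⟪D'.source i, D.source j⟫_𝕜‖ ^ 2 * D'.exponent i ^ 2
      ≤ ∑ i, ‖⟪D'.source i, D.source j⟫_𝕜‖ ^ 2 * (D.exponent j ^ 2 +
          D.exponent j * Real.exp (-(2 * D.exponent j)) *
            (Real.exp (2 * D'.exponent i) - Real.exp (2 * D.exponent j)) +
          (1 + R) * Real.exp (4 * R) *
            (Real.exp (2 * D'.exponent i) - Real.exp (2 * D.exponent j)) ^ 2) := by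
        gcongr with i
        exact sq_le_sq_add_mul_exp_sub_exp hR (hD j) (hD' i)
    _ = _ := by
        rw [D.norm_sq_gram_sub_source D', D'.norm_map_sq, hsource]
        simp only [mul_add, Finset.sum_add_distrib, ← Finset.sum_sub_distrib, Finset.mul_sum]
        rw [← Finset.sum_mul, hone, one_mul, add_assoc]
        congr 2 <;> exact Finset.sum_congr rfl fun i _ ↦ by ring

end LogSVD

end Energy

section LogEnergy

lemma abs_mul_exp_neg_two_mul_le {R x : ℝ} (hR : 0 ≤ R) (hx : -R ≤ x) :
    |x| * Real.exp (-(2 * x)) ≤ (1 + R) * Real.exp (2 * R) := by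
  have habs : |x| ≤ (x + R) + R := abs_le.2 ⟨by linarith, by linarith⟩
  have hone : 1 ≤ Real.exp (2 * (x + R)) := Real.one_le_exp (by linarith)
  have hexp : x + R ≤ Real.exp (2 * (x + R)) := by linarith [Real.add_one_le_exp (2 * (x + R))]
  calc |x| * Real.exp (-(2 * x)) ≤ (1 + R) * Real.exp (2 * (x + R)) * Real.exp (-(2 * x)) := by
        gcongr
        nlinarith
    _ = (1 + R) * Real.exp (2 * R) := by
        rw [mul_assoc, ← Real.exp_add]
        ring_nf

variable {𝕜 E : Type*} [RCLike 𝕜] [NormedAddCommGroup E] [InnerProductSpace 𝕜 E]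
  [FiniteDimensional 𝕜 E]

namespace LogSVD

lemma energy_eq {s : E →ₗ[𝕜] E} (D D' : LogSVD s) : D.energy = D'.energy := by
  have energy_le_energy (D D' : LogSVD s) : D'.energy ≤ D.energy := by
    have hR : 0 ≤ ∑ j, |D.exponent j| + ∑ i, |D'.exponent i| := by positivity
    have hx (j) := Finset.single_le_sum (fun i _ ↦ abs_nonneg (D.exponent i)) (Finset.mem_univ j)
    have hy (j) := Finset.single_le_sum (fun i _ ↦ abs_nonneg (D'.exponent i)) (Finset.mem_univ j)
    have hx0 : 0 ≤ ∑ j, |D.exponent j| := by positivity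
    have hy0 : 0 ≤ ∑ j, |D'.exponent j| := by positivity
    simpa using D.energy_le D' hR (fun j ↦ by linarith [neg_abs_le (D.exponent j), hx j])
      fun i ↦ by linarith [neg_abs_le (D'.exponent i), hy i]
  exact (energy_le_energy D' D).antisymm (energy_le_energy D D')

lemma energy_le_of_norm_gram_sub_le {s s' : E →ₗ[𝕜] E} (D : LogSVD s) (D' : LogSVD s') {R δ : ℝ}
    (hR : 0 ≤ R) (hD : ∀ j, -R ≤ D.exponent j) (hD' : ∀ i, -R ≤ D'.exponent i)
    (hδ : ∀ v, ‖(s'.adjoint ∘ₗ s' - s.adjoint ∘ₗ s) v‖ ≤ δ * ‖v‖) :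
    D'.energy ≤ D.energy + finrank 𝕜 E *
      ((1 + R) * Real.exp (2 * R) * δ + (1 + R) * Real.exp (4 * R) * δ ^ 2) := by
  refine (D.energy_le D' hR hD hD').trans ?_
  rw [finrank_eq_card_basis D.source.toBasis, ← nsmul_eq_mul, ← Finset.card_univ]
  gcongr
  refine Finset.sum_le_card_nsmul _ _ _ fun j _ ↦ ?_
  have hδj : ‖(s'.adjoint ∘ₗ s' - s.adjoint ∘ₗ s) (D.source j)‖ ≤ δ := by
    simpa using hδ (D.source j)
  have hnorm : |‖s' (D.source j)‖ ^ 2 - ‖s (D.source j)‖ ^ 2| ≤ δ := by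
    have : ‖s' (D.source j)‖ ^ 2 - ‖s (D.source j)‖ ^ 2 =
        RCLike.re ⟪D.source j, (s'.adjoint ∘ₗ s' - s.adjoint ∘ₗ s) (D.source j)⟫_𝕜 := by
      simp [inner_sub_right, LinearMap.adjoint_inner_right]
    rw [this]
    refine (RCLike.abs_re_le_norm _).trans ((norm_inner_le_norm _ _).trans ?_)
    simpa using hδj
  refine add_le_add ((le_abs_self _).trans ?_) (by gcongr)
  rw [abs_mul, abs_mul, Real.abs_exp]
  exact mul_le_mul (abs_mul_exp_neg_two_mul_le hR (hD j)) hnorm (abs_nonneg _) (by positivity)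

end LogSVD

/-- The squared Hilbert–Schmidt norm of `log |s|`, for injective `s`. The infimum is a way to pick
the common value of the energies of all decompositions. -/
noncomputable def logEnergy (s : E →ₗ[𝕜] E) : ℝ := ⨅ D : LogSVD s, D.energy

lemma LogSVD.logEnergy_eq {s : E →ₗ[𝕜] E} (D : LogSVD s) : logEnergy s = D.energy := by
  have : Nonempty (LogSVD s) := ⟨D⟩
  rw [logEnergy, iInf_congr fun D' ↦ D'.energy_eq D, ciInf_const]

lemma exists_eventually_neg_le_exponent {B₀ : E →L[𝕜] E} (hB₀ : IsUnit B₀) :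
    ∃ R : ℝ, 0 ≤ R ∧ ∀ᶠ B : E →L[𝕜] E in 𝓝 B₀,
      ∀ (D : LogSVD (B : E →ₗ[𝕜] E)) (i : D.index), -R ≤ D.exponent i := by
  have : CompleteSpace E := FiniteDimensional.complete 𝕜 E
  obtain ⟨u, rfl⟩ := hB₀
  have hlt : ∀ᶠ B in 𝓝 (u : E →L[𝕜] E),
      ‖Ring.inverse B‖ < Real.exp ‖Ring.inverse (u : E →L[𝕜] E)‖ :=
    (NormedRing.inverse_continuousAt u).norm.eventually_lt_const
      (by linarith [Real.add_one_le_exp ‖Ring.inverse (u : E →L[𝕜] E)‖])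
  refine ⟨‖Ring.inverse (u : E →L[𝕜] E)‖, norm_nonneg _, ?_⟩
  filter_upwards [hlt, Units.isOpen.mem_nhds u.isUnit] with B hB hunit D i
  have hinv : Ring.inverse B (B (D.source i)) = D.source i :=
    DFunLike.congr_fun (Ring.inverse_mul_cancel B hunit) _
  have hle := (Ring.inverse B).le_opNorm (B (D.source i))
  rw [hinv, D.source.norm_eq_one, show ‖B (D.source i)‖ = _ from D.norm_map_source i] at hle
  have hlt : 1 < Real.exp (‖Ring.inverse (u : E →L[𝕜] E)‖ + D.exponent i) := by
    rw [Real.exp_add]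
    exact hle.trans_lt (by gcongr)
  linarith [Real.one_lt_exp_iff.1 hlt]

lemma nonempty_logSVD_of_isUnit {B : E →L[𝕜] E} (hB : IsUnit B) :
    Nonempty (LogSVD (B : E →ₗ[𝕜] E)) := by
  have : CompleteSpace E := FiniteDimensional.complete 𝕜 E
  exact nonempty_logSVD_of_injective (ContinuousLinearMap.isUnit_iff_bijective.1 hB).1

lemma continuousAt_logEnergy {B₀ : E →L[𝕜] E} (hB₀ : IsUnit B₀) :
    ContinuousAt (fun B : E →L[𝕜] E ↦ logEnergy (B : E →ₗ[𝕜] E)) B₀ := by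
  have : CompleteSpace E := FiniteDimensional.complete 𝕜 E
  obtain ⟨R, hR, hexponent⟩ := exists_eventually_neg_le_exponent hB₀
  let gram (B : E →L[𝕜] E) : E →L[𝕜] E := B.adjoint ∘L B
  let bound (B : E →L[𝕜] E) : ℝ := finrank 𝕜 E *
    ((1 + R) * Real.exp (2 * R) * ‖gram B - gram B₀‖ +
      (1 + R) * Real.exp (4 * R) * ‖gram B - gram B₀‖ ^ 2)
  have hbound : Tendsto bound (𝓝 B₀) (𝓝 0) := by
    have : Continuous bound := by fun_prop
    simpa [bound] using this.tendsto B₀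
  have hgram (B B' : E →L[𝕜] E) (v : E) :
      ‖((B : E →ₗ[𝕜] E).adjoint ∘ₗ (B : E →ₗ[𝕜] E) -
        (B' : E →ₗ[𝕜] E).adjoint ∘ₗ (B' : E →ₗ[𝕜] E)) v‖ ≤ ‖gram B - gram B'‖ * ‖v‖ :=
    (gram B - gram B').le_opNorm v
  refine tendsto_iff_dist_tendsto_zero.2 (squeeze_zero' (.of_forall fun _ ↦ dist_nonneg) ?_ hbound)
  filter_upwards [hexponent, Units.isOpen.mem_nhds hB₀] with B hB hunit
  obtain ⟨D₀⟩ := nonempty_logSVD_of_isUnit hB₀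
  obtain ⟨D⟩ := nonempty_logSVD_of_isUnit hunit
  rw [Real.dist_eq, D.logEnergy_eq, D₀.logEnergy_eq, abs_sub_le_iff, sub_le_iff_le_add',
    sub_le_iff_le_add']
  refine ⟨D₀.energy_le_of_norm_gram_sub_le D hR (hexponent.self_of_nhds D₀) (hB D) (hgram B B₀), ?_⟩
  simpa only [bound, norm_sub_rev] using
    D.energy_le_of_norm_gram_sub_le D₀ hR (hB D) (hexponent.self_of_nhds D₀) (hgram B₀ B)

end LogEnergy

section FirstVariation

variable {E : Type*} [NormedAddCommGroup E] [InnerProductSpace ℂ E] [FiniteDimensional ℂ E]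

lemma exists_hasDerivAt_logEnergy_le {B : ℝ → E →L[ℂ] E} {B' s : E →L[ℂ] E}
    (hB : HasDerivAt B B' 0) (hB0 : B 0 = s) (hs : IsUnit s) (D : LogSVD (s : E →ₗ[ℂ] E)) :
    ∃ ψ : ℝ → ℝ, ψ 0 = logEnergy (s : E →ₗ[ℂ] E) ∧
      (∀ᶠ t in 𝓝 0, logEnergy (B t : E →ₗ[ℂ] E) ≤ ψ t) ∧
      HasDerivAt ψ (∑ j, D.exponent j * Real.exp (-(2 * D.exponent j)) *
        (2 * (⟪s (D.source j), B' (D.source j)⟫_ℂ).re)) 0 := by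
  subst hB0
  have : CompleteSpace E := FiniteDimensional.complete ℂ E
  let _ : InnerProductSpace ℝ E := .complexToReal
  obtain ⟨R, hR, hexponent⟩ := exists_eventually_neg_le_exponent hs
  have hasDerivAt_apply {A : ℝ → E →L[ℂ] E} {A' : E →L[ℂ] E} (hA : HasDerivAt A A' 0) (v : E) :
      HasDerivAt (fun t ↦ A t v) (A' v) 0 :=
    ((ContinuousLinearMap.apply ℂ E v).restrictScalars ℝ).hasFDerivAt.comp_hasDerivAt 0 hA
  let gramDiff (t : ℝ) : E →L[ℂ] E := star (B t) * B t - star (B 0) * B 0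
  have hgram (j) : HasDerivAt (fun t ↦ ‖gramDiff t (D.source j)‖ ^ 2) 0 0 := by
    have := hasDerivAt_apply ((hB.star.mul hB).sub_const (star (B 0) * B 0)) (D.source j)
    simpa [gramDiff] using this.norm_sq
  refine ⟨fun t ↦ D.energy + ∑ j, (D.exponent j * Real.exp (-(2 * D.exponent j)) *
    (‖B t (D.source j)‖ ^ 2 - ‖B 0 (D.source j)‖ ^ 2) +
      (1 + R) * Real.exp (4 * R) * ‖gramDiff t (D.source j)‖ ^ 2), ?_, ?_, ?_⟩
  · simp [gramDiff, D.logEnergy_eq]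
  · filter_upwards [hB.continuousAt.eventually hexponent,
      hB.continuousAt.eventually (Units.isOpen.mem_nhds hs)] with t ht hunit
    obtain ⟨D'⟩ := nonempty_logSVD_of_isUnit hunit
    rw [D'.logEnergy_eq]
    exact D.energy_le D' hR (hexponent.self_of_nhds D) (ht D')
  · refine .const_add _ (.fun_sum fun j _ ↦ ?_)
    have hnorm := (hasDerivAt_apply hB (D.source j)).norm_sq
    simpa using! ((hnorm.sub_const _).const_mul _).add ((hgram j).const_mul _)

end FirstVariation

section CriticalPoint

lemma hasDerivAt_exp_conj {A : Type*} [NormedRing A] [NormedAlgebra ℝ A] [CompleteSpace A]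
    (Z s : A) :
    HasDerivAt (fun t : ℝ ↦ NormedSpace.exp (t • Z) * s * NormedSpace.exp (-(t • Z)))
      (Z * s - s * Z) 0 := by
  have hpos := hasDerivAt_exp_smul_const (𝕂 := ℝ) Z (0 : ℝ)
  have hneg := hasDerivAt_exp_smul_const (𝕂 := ℝ) (-Z) (0 : ℝ)
  simpa [sub_eq_add_neg] using! (hpos.mul_const s).mul hneg

variable {E κ : Type*} [NormedAddCommGroup E] [InnerProductSpace ℂ E]

lemma LogSVD.two_mul_re_trace {s : E →ₗ[ℂ] E} (D : LogSVD s) (Z : E →ₗ[ℂ] E) :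
    2 * (LinearMap.trace ℂ E (Z * (D.logTarget - D.logSource))).re =
      ∑ j, D.exponent j * Real.exp (-(2 * D.exponent j)) *
        (2 * (⟪s (D.source j), (Z * s - s * Z) (D.source j)⟫_ℂ).re) := by
  rw [mul_sub, map_sub, LinearMap.trace_eq_sum_inner _ D.target,
    LinearMap.trace_eq_sum_inner _ D.source, ← Finset.sum_sub_distrib, Complex.re_sum,
    Finset.mul_sum]
  refine Finset.sum_congr rfl fun j _ ↦ ?_
  have hexp : Real.exp (-(2 * D.exponent j)) * (Real.exp (D.exponent j) * Real.exp (D.exponent j)) =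
      1 := by
    rw [← Real.exp_add, ← Real.exp_add]
    ring_nf
    exact Real.exp_zero
  have hcommutator : ⟪s (D.source j), (Z * s - s * Z) (D.source j)⟫_ℂ =
      ((Real.exp (D.exponent j) * Real.exp (D.exponent j) : ℝ) : ℂ) *
        (⟪D.target j, Z (D.target j)⟫_ℂ - ⟪D.source j, Z (D.source j)⟫_ℂ) := by
    simp only [LinearMap.sub_apply, Module.End.mul_apply, D.map_source, map_smul, inner_sub_right,
      inner_smul_left, inner_smul_right, D.inner_target_map, Complex.coe_algebraMap,
      Complex.conj_ofReal, Complex.ofReal_mul]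
    ring
  rw [hcommutator, Complex.re_ofReal_mul]
  simp only [Module.End.mul_apply, logTarget, logSource, diagonalOperator_apply_self, map_smul,
    inner_smul_right, ← mul_sub, Complex.coe_algebraMap, Complex.re_ofReal_mul]
  linear_combination (-2 * D.exponent j *
    (⟪D.target j, Z (D.target j)⟫_ℂ - ⟪D.source j, Z (D.source j)⟫_ℂ).re) * hexp

variable [FiniteDimensional ℂ E]

lemma eq_zero_of_re_trace_mul_self_eq_zero {Z : E →ₗ[ℂ] E} (hZ : Z.IsSymmetric)
    (h : (LinearMap.trace ℂ E (Z * Z)).re = 0) : Z = 0 := by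
  let b := stdOrthonormalBasis ℂ E
  have htrace : (LinearMap.trace ℂ E (Z * Z)).re = ∑ i, ‖Z (b i)‖ ^ 2 := by
    rw [LinearMap.trace_eq_sum_inner _ b, Complex.re_sum]
    refine Finset.sum_congr rfl fun i _ ↦ ?_
    rw [Module.End.mul_apply, ← hZ]
    exact inner_self_eq_norm_sq (𝕜 := ℂ) _
  rw [htrace, Finset.sum_eq_zero_iff_of_nonneg fun _ _ ↦ by positivity] at h
  exact b.toBasis.ext fun i ↦ by simpa using h i (Finset.mem_univ i)

/-- The sum of the squared distances, up to a constant factor, in the space of inner products,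
from `⟪h v, h w⟫` to its translates under the operators `s a`. -/
noncomputable def conjEnergy [Fintype κ] (s : κ → E →L[ℂ] E) (h : E →L[ℂ] E) : ℝ :=
  ∑ a, logEnergy ((h * s a * Ring.inverse h : E →L[ℂ] E) : E →ₗ[ℂ] E)

lemma isLogBalanced_of_conjEnergy_one_le [Fintype κ] {s : κ → E →L[ℂ] E} (hs : ∀ a, IsUnit (s a))
    (hmin : ∀ h, IsUnit h → conjEnergy s 1 ≤ conjEnergy s h) :
    IsLogBalanced fun a ↦ (s a : E →ₗ[ℂ] E) := by
  have : CompleteSpace E := FiniteDimensional.complete ℂ E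
  let _ : NormedAlgebra ℚ (E →L[ℂ] E) := .restrictScalars ℚ ℂ _
  have D (a) : LogSVD (s a : E →ₗ[ℂ] E) := (nonempty_logSVD_of_isUnit (hs a)).some
  let Z : E →ₗ[ℂ] E := ∑ a, ((D a).logTarget - (D a).logSource)
  have hZ : Z.IsSymmetric :=
    LinearMap.isSymmetric_sum _ fun a _ ↦
      (diagonalOperator_isSymmetric _ _).sub (diagonalOperator_isSymmetric _ _)
  have hderiv (a) := hasDerivAt_exp_conj Z.toContinuousLinearMap (s a)
  choose ψ hψ0 hle hψ using fun a ↦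
    exists_hasDerivAt_logEnergy_le (hderiv a) (by simp) (hs a) (D a)
  have hloc : IsLocalMin (fun t ↦ ∑ a, ψ a t) 0 := by
    filter_upwards [eventually_all.2 hle] with t ht
    have hconj := hmin _ (NormedSpace.isUnit_exp (t • Z.toContinuousLinearMap))
    simp only [conjEnergy, Ring.inverse_exp, Ring.inverse_one, one_mul, mul_one] at hconj
    simp only [hψ0]
    exact hconj.trans (Finset.sum_le_sum fun a _ ↦ ht a)
  have htrace := hloc.hasDerivAt_eq_zero (.fun_sum fun a _ ↦
    (hψ a).congr_deriv ((D a).two_mul_re_trace Z).symm)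
  rw [← Finset.mul_sum, ← Complex.re_sum, ← map_sum, ← Finset.mul_sum] at htrace
  have hZ0 : Z = 0 := eq_zero_of_re_trace_mul_self_eq_zero hZ (by linarith)
  refine ⟨D, ?_⟩
  rwa [eq_comm, ← sub_eq_zero, ← Finset.sum_sub_distrib]

end CriticalPoint

section NormBound

variable {𝕜 E κ : Type*} [RCLike 𝕜] [NormedAddCommGroup E] [InnerProductSpace 𝕜 E]

lemma LogSVD.norm_map_le {s : E →ₗ[𝕜] E} (D : LogSVD s) (v : E) :
    ‖s v‖ ≤ Real.exp √D.energy * ‖v‖ := by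
  refine abs_le_of_sq_le_sq' ?_ (by positivity) |>.2
  rw [D.norm_map_sq, mul_pow, ← Real.exp_nat_mul, Nat.cast_ofNat,
    ← D.source.sum_sq_norm_inner_right, Finset.mul_sum]
  refine Finset.sum_le_sum fun i _ ↦ ?_
  have : D.exponent i ≤ √D.energy := Real.le_sqrt_of_sq_le <|
    Finset.single_le_sum (fun j _ ↦ sq_nonneg (D.exponent j)) (Finset.mem_univ i)
  rw [mul_comm]
  gcongr

lemma logEnergy_nonneg (s : E →ₗ[𝕜] E) : 0 ≤ logEnergy s :=
  Real.iInf_nonneg fun D ↦ Finset.sum_nonneg fun i _ ↦ sq_nonneg (D.exponent i)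

variable [FiniteDimensional 𝕜 E]

lemma isUnit_of_norm_map_le {s : κ → E →ₗ[𝕜] E}
    (hirr : ∀ L : Submodule 𝕜 E, (∀ a, ∀ v ∈ L, s a v ∈ L) → L = ⊥ ∨ L = ⊤)
    {h : E →L[𝕜] E} (hh : h ≠ 0) {C : ℝ} (hC : ∀ a v, ‖h (s a v)‖ ≤ C * ‖h v‖) : IsUnit h := by
  have : CompleteSpace E := FiniteDimensional.complete 𝕜 E
  have hinj : Function.Injective h := by
    rcases hirr (LinearMap.ker (h : E →ₗ[𝕜] E)) fun a v hv ↦ by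
      simpa [show h v = 0 from hv] using hC a v with hker | hker
    · exact LinearMap.ker_eq_bot.1 hker
    · exact absurd (ContinuousLinearMap.ext (LinearMap.congr_fun (LinearMap.ker_eq_top.1 hker))) hh
  exact ContinuousLinearMap.isUnit_iff_bijective.2
    ⟨hinj, (LinearMap.injective_iff_surjective (f := (h : E →ₗ[𝕜] E))).1 hinj⟩

end NormBound

section Minimizer

lemma isUnit_mul_mul_ringInverse {A : Type*} [MonoidWithZero A] {h s : A} (hh : IsUnit h)
    (hs : IsUnit s) : IsUnit (h * s * Ring.inverse h) :=
  (hh.mul hs).mul (isUnit_ringInverse.2 hh)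

variable {E κ : Type*} [NormedAddCommGroup E] [InnerProductSpace ℂ E] [Fintype κ]
  {s : κ → E →L[ℂ] E} {h : E →L[ℂ] E}

lemma conjEnergy_smul {c : ℂ} (hc : c ≠ 0) (hh : IsUnit h) :
    conjEnergy s (c • h) = conjEnergy s h := by
  obtain ⟨u, rfl⟩ := hh
  have hinv : Ring.inverse (c • (u : E →L[ℂ] E)) = c⁻¹ • Ring.inverse (u : E →L[ℂ] E) := by
    rw [Ring.inverse_unit]
    exact Ring.inverse_unit (Units.mk0 c hc • u)
  simp [conjEnergy, hinv, smul_smul, hc]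

lemma conjEnergy_conj {g : E →L[ℂ] E} (hg : IsUnit g) (hh : IsUnit h) :
    conjEnergy (fun a ↦ h * s a * Ring.inverse h) g = conjEnergy s (g * h) := by
  obtain ⟨u, rfl⟩ := hg
  obtain ⟨w, rfl⟩ := hh
  have hinv : Ring.inverse (u * w : E →L[ℂ] E) =
      Ring.inverse (w : E →L[ℂ] E) * Ring.inverse (u : E →L[ℂ] E) := by
    simp only [← Units.val_mul, Ring.inverse_unit, mul_inv_rev]
  simp only [conjEnergy, hinv, mul_assoc]

variable [FiniteDimensional ℂ E]

lemma continuousAt_conjEnergy (hs : ∀ a, IsUnit (s a)) (hh : IsUnit h) :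
    ContinuousAt (conjEnergy s) h := by
  have : CompleteSpace E := FiniteDimensional.complete ℂ E
  refine tendsto_finsetSum _ fun a _ ↦ ?_
  have hinv : ContinuousAt Ring.inverse h := by
    obtain ⟨u, rfl⟩ := hh
    exact NormedRing.inverse_continuousAt u
  exact (continuousAt_logEnergy (isUnit_mul_mul_ringInverse hh (hs a))).comp
    (f := fun g ↦ g * s a * Ring.inverse g)
    ((continuousAt_id.mul continuousAt_const).mul hinv)

lemma norm_map_le_of_conjEnergy_le (hs : ∀ a, IsUnit (s a)) (hh : IsUnit h) {C : ℝ}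
    (hC : conjEnergy s h ≤ C) (a : κ) (v : E) : ‖h (s a v)‖ ≤ Real.exp √C * ‖h v‖ := by
  obtain ⟨D⟩ := nonempty_logSVD_of_isUnit (isUnit_mul_mul_ringInverse hh (hs a))
  have henergy : D.energy ≤ C := by
    rw [← D.logEnergy_eq]
    exact (Finset.single_le_sum
      (f := fun a ↦ logEnergy ((h * s a * Ring.inverse h : E →L[ℂ] E) : E →ₗ[ℂ] E))
      (fun a _ ↦ logEnergy_nonneg _) (Finset.mem_univ a)).trans hC
  have hle := D.norm_map_le (h v)
  have hinv : Ring.inverse h (h v) = v := DFunLike.congr_fun (Ring.inverse_mul_cancel h hh) v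
  simp only [ContinuousLinearMap.coe_coe, mul_apply_eq_comp, hinv] at hle
  exact hle.trans (by gcongr)

lemma exists_forall_conjEnergy_le [Nontrivial E] (hs : ∀ a, IsUnit (s a))
    (hirr : ∀ L : Submodule ℂ E, (∀ a, ∀ v ∈ L, s a v ∈ L) → L = ⊥ ∨ L = ⊤) :
    ∃ h, IsUnit h ∧ ∀ g, IsUnit g → conjEnergy s h ≤ conjEnergy s g := by
  have : ProperSpace (E →L[ℂ] E) := FiniteDimensional.proper ℂ _
  let K : Set (E →L[ℂ] E) := Metric.sphere 0 1 ∩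
    ⋂ a, ⋂ v, {h | ‖h (s a v)‖ ≤ Real.exp √(conjEnergy s 1) * ‖h v‖}
  have hK : IsCompact K := by
    refine (isCompact_sphere 0 1).inter_right ?_
    exact isClosed_iInter fun a ↦ isClosed_iInter fun v ↦ isClosed_le (by fun_prop) (by fun_prop)
  have isUnit_of_mem {h} (h_mem : h ∈ K) : IsUnit h := by
    have hbound : ∀ a v, ‖h (s a v)‖ ≤ Real.exp √(conjEnergy s 1) * ‖h v‖ := by
      simpa using h_mem.2
    exact isUnit_of_norm_map_le (s := fun a ↦ (s a : E →ₗ[ℂ] E)) hirr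
      (ne_zero_of_mem_unit_sphere ⟨h, h_mem.1⟩) hbound
  have exists_mem {g} (hg : IsUnit g) (hle : conjEnergy s g ≤ conjEnergy s 1) :
      ∃ h ∈ K, conjEnergy s h = conjEnergy s g := by
    have hnorm : (‖g‖⁻¹ : ℂ) ≠ 0 := by simpa using hg.ne_zero
    refine ⟨(‖g‖⁻¹ : ℂ) • g, ⟨?_, Set.mem_iInter₂.2 fun a v ↦ ?_⟩, conjEnergy_smul hnorm hg⟩
    · simp [norm_smul, hg.ne_zero]
    · have := norm_map_le_of_conjEnergy_le hs hg hle a v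
      simp only [Set.mem_ofPred_eq, smul_apply, norm_smul]
      rw [mul_left_comm]
      gcongr
  obtain ⟨h₁, h₁_mem, h₁_eq⟩ := exists_mem isUnit_one le_rfl
  obtain ⟨h, h_mem, hmin⟩ := hK.exists_isMinOn ⟨h₁, h₁_mem⟩ fun g hg ↦
    (continuousAt_conjEnergy hs (isUnit_of_mem hg)).continuousWithinAt
  refine ⟨h, isUnit_of_mem h_mem, fun g hg ↦ ?_⟩
  rcases le_total (conjEnergy s g) (conjEnergy s 1) with hle | hle
  · obtain ⟨g', hg', heq⟩ := exists_mem hg hle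
    exact heq ▸ hmin hg'
  · exact (h₁_eq ▸ hmin h₁_mem : conjEnergy s h ≤ conjEnergy s 1).trans hle

theorem exists_isLogBalanced_conj [Nontrivial E] (hs : ∀ a, IsUnit (s a))
    (hirr : ∀ L : Submodule ℂ E, (∀ a, ∀ v ∈ L, s a v ∈ L) → L = ⊥ ∨ L = ⊤) :
    ∃ h, IsUnit h ∧
      IsLogBalanced fun a ↦ ((h * s a * Ring.inverse h : E →L[ℂ] E) : E →ₗ[ℂ] E) := by
  obtain ⟨h, hh, hmin⟩ := exists_forall_conjEnergy_le hs hirr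
  refine ⟨h, hh, isLogBalanced_of_conjEnergy_one_le
    (fun a ↦ isUnit_mul_mul_ringInverse hh (hs a)) fun g hg ↦ ?_⟩
  rw [conjEnergy_conj isUnit_one hh, conjEnergy_conj hg hh, one_mul]
  exact hmin _ (hg.mul hh)

end Minimizer

section SemisimpleFamily

variable {K κ ι G V : Type*} [Field K] [AddCommGroup V] [Module K V]

/-- Complete reducibility of a vector space under a family of operators: every invariant subspace
has an invariant complement. -/
def IsSemisimpleFamily (s : κ → V →ₗ[K] V) : Prop :=
  ∀ L : Submodule K V, (∀ a, ∀ v ∈ L, s a v ∈ L) →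
    ∃ L' : Submodule K V, (∀ a, ∀ v ∈ L', s a v ∈ L') ∧ IsCompl L L'

lemma isSemisimpleModule_asModule_iff [Monoid G] (ρ : Representation K G V) :
    IsSemisimpleModule (MonoidAlgebra K G) ρ.asModule ↔ IsSemisimpleFamily ρ := by
  rw [← Representation.isSemisimpleRepresentation_iff_isSemisimpleModule_asModule]
  constructor
  · intro h L hL
    obtain ⟨σ, hσ⟩ := h.exists_isCompl (⟨L, fun g v hv ↦ hL g v hv⟩ : Subrepresentation ρ)
    refine ⟨σ.toSubmodule, fun g v hv ↦ σ.apply_mem_toSubmodule g hv, ?_⟩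
    rw [isCompl_iff, disjoint_iff, codisjoint_iff] at hσ ⊢
    exact hσ.imp (congrArg Subrepresentation.toSubmodule) (congrArg Subrepresentation.toSubmodule)
  · refine fun h ↦ ⟨fun τ ↦ ?_⟩
    obtain ⟨L', hL', hc⟩ := h τ.toSubmodule fun g v hv ↦ τ.apply_mem_toSubmodule g hv
    refine ⟨⟨L', fun g v hv ↦ hL' g v hv⟩, ?_⟩
    rw [isCompl_iff, disjoint_iff, codisjoint_iff] at hc ⊢
    exact hc.imp (Subrepresentation.toSubmodule_injective ·)
      (Subrepresentation.toSubmodule_injective ·)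

lemma apply_mem_of_mem_span {T : Set (End K V)} {L : Submodule K V}
    (hL : ∀ t ∈ T, ∀ v ∈ L, t v ∈ L) {f : End K V} (hf : f ∈ Submodule.span K T) {v : V}
    (hv : v ∈ L) : f v ∈ L := by
  induction hf using Submodule.span_induction with
  | mem t ht => exact hL t ht v hv
  | zero => exact L.zero_mem
  | add f g _ _ hf hg => exact L.add_mem hf hg
  | smul c f _ hf => exact L.smul_mem c hf

lemma IsSemisimpleFamily.of_span_eq {s : κ → V →ₗ[K] V} {t : ι → V →ₗ[K] V}
    (hs : IsSemisimpleFamily s)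
    (h : Submodule.span K (Set.range s) = Submodule.span K (Set.range t)) :
    IsSemisimpleFamily t := by
  have hst (L : Submodule K V) :
      (∀ a, ∀ v ∈ L, s a v ∈ L) ↔ ∀ b, ∀ v ∈ L, t b v ∈ L := by
    refine ⟨fun hL b v ↦ apply_mem_of_mem_span (Set.forall_mem_range.2 hL) ?_,
      fun hL a v ↦ apply_mem_of_mem_span (Set.forall_mem_range.2 hL) ?_⟩
    · exact h ▸ Submodule.subset_span (Set.mem_range_self b)
    · exact h ▸ Submodule.subset_span (Set.mem_range_self a)
  simpa only [IsSemisimpleFamily, hst] using hs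

lemma isSemisimpleFamily_congr {s : κ → V →ₗ[K] V} {t : ι → V →ₗ[K] V}
    (h : Submodule.span K (Set.range s) = Submodule.span K (Set.range t)) :
    IsSemisimpleFamily s ↔ IsSemisimpleFamily t :=
  ⟨fun hs ↦ hs.of_span_eq h, fun ht ↦ ht.of_span_eq h.symm⟩

lemma IsSemisimpleFamily.restrict {s : κ → V →ₗ[K] V} (hs : IsSemisimpleFamily s)
    {L : Submodule K V} (hL : ∀ a, ∀ v ∈ L, s a v ∈ L) :
    IsSemisimpleFamily fun a ↦ (s a).restrict (hL a) := by
  intro M hM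
  obtain ⟨N, hN, hMN⟩ := hs (M.map L.subtype) (by
    rintro a _ ⟨v, hv, rfl⟩
    exact ⟨_, hM a v hv, rfl⟩)
  refine ⟨N.comap L.subtype, fun a v hv ↦ hN a v hv, ?_, ?_⟩
  · rw [Submodule.disjoint_def]
    exact fun v hv hvN ↦ Subtype.ext
      (Submodule.disjoint_def.1 hMN.disjoint v (Submodule.mem_map_of_mem hv) hvN)
  · rw [Submodule.codisjoint_iff_exists_add_eq]
    intro v
    obtain ⟨_, n, ⟨m, hm, rfl⟩, hn, hmn⟩ :=
      Submodule.codisjoint_iff_exists_add_eq.1 hMN.codisjoint (v : V)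
    refine ⟨m, v - m, hm, ?_, add_sub_cancel m v⟩
    simpa [← hmn] using hn

lemma eventually_span_image_eq {M : Type*} [AddCommGroup M] [Module K M] [FiniteDimensional K M]
    (f : G → M) :
    ∀ᶠ S : Finset G in atTop, Submodule.span K (f '' S) = Submodule.span K (Set.range f) := by
  classical
  obtain ⟨t, ht, htspan⟩ := (Submodule.fg_span_iff_fg_span_finset_subset _).1
    (IsNoetherian.noetherian (Submodule.span K (Set.range f)))
  obtain ⟨S, -, rfl⟩ := Finset.subset_set_image_iff.1 (ht.trans Set.image_univ.ge)
  filter_upwards [eventually_ge_atTop S] with T hT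
  refine (Submodule.span_mono (Set.image_subset_range f T)).antisymm ?_
  rw [htspan, Finset.coe_image]
  exact Submodule.span_mono (Set.image_mono hT)

end SemisimpleFamily

section BalancedMetric

variable {κ V W : Type*} [Fintype κ] [AddCommGroup V] [Module ℂ V] [AddCommGroup W] [Module ℂ W]
  {s : κ → V →ₗ[ℂ] V} {t : κ → W →ₗ[ℂ] W}

/-- A finite family of operators is log-balanced for some Hermitian inner product, given as the
pullback of that of a finite-dimensional inner product space along a linear equivalence. -/
def HasBalancedMetric (s : κ → V →ₗ[ℂ] V) : Prop :=
  ∃ (E : Type) (_ : NormedAddCommGroup E) (_ : InnerProductSpace ℂ E)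
    (_ : FiniteDimensional ℂ E) (Φ : V ≃ₗ[ℂ] E), IsLogBalanced fun a ↦ Φ.conj (s a)

namespace HasBalancedMetric

lemma of_conj (e : V ≃ₗ[ℂ] W) (h : HasBalancedMetric fun a ↦ e.conj (s a)) :
    HasBalancedMetric s := by
  obtain ⟨E, _, _, _, Φ, hΦ⟩ := h
  exact ⟨E, _, _, ‹_›, e.trans Φ, hΦ⟩

lemma tensor (hs : HasBalancedMetric s) (ht : HasBalancedMetric t) :
    HasBalancedMetric fun a ↦ TensorProduct.map (s a) (t a) := by
  obtain ⟨E, _, _, _, Φ, hΦ⟩ := hs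
  obtain ⟨F, _, _, _, Ψ, hΨ⟩ := ht
  refine ⟨E ⊗[ℂ] F, _, _, inferInstance, TensorProduct.congr Φ Ψ, ?_⟩
  convert hΦ.tensor hΨ using 2 with a
  ext x y
  simp [LinearEquiv.conj_apply]

lemma prod (hs : HasBalancedMetric s) (ht : HasBalancedMetric t) :
    HasBalancedMetric fun a ↦ (s a).prodMap (t a) := by
  obtain ⟨E, _, _, _, Φ, hΦ⟩ := hs
  obtain ⟨F, _, _, _, Ψ, hΨ⟩ := ht
  exact ⟨WithLp 2 (E × F), _, _, inferInstance,
    (Φ.prodCongr Ψ).trans (WithLp.linearEquiv 2 ℂ (E × F)).symm, hΦ.prod hΨ⟩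

lemma isSemisimpleFamily (hs : HasBalancedMetric s) : IsSemisimpleFamily s := by
  obtain ⟨E, _, _, _, Φ, hΦ⟩ := hs
  intro L hL
  have hmap (a : κ) : ∀ x ∈ L.map (Φ : V →ₗ[ℂ] E), Φ.conj (s a) x ∈ L.map (Φ : V →ₗ[ℂ] E) := by
    rintro _ ⟨v, hv, rfl⟩
    exact ⟨s a v, hL a v hv, by simp [LinearEquiv.conj_apply]⟩
  refine ⟨(L.map (Φ : V →ₗ[ℂ] E))ᗮ.comap (Φ : V →ₗ[ℂ] E), fun a v hv ↦ ?_, ?_⟩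
  · simpa [LinearEquiv.conj_apply] using hΦ.map_mem_orthogonal hmap a hv
  · simpa only [Submodule.orderIsoMapComap_symm_apply,
      Submodule.comap_map_eq_of_injective (f := (Φ : V →ₗ[ℂ] E)) Φ.injective] using
      (L.map (Φ : V →ₗ[ℂ] E)).isCompl_orthogonal.map (Submodule.orderIsoMapComap Φ).symm

lemma of_subsingleton [Subsingleton V] : HasBalancedMetric s := by
  let Φ : V ≃ₗ[ℂ] EuclideanSpace ℂ (Fin 0) :=
    LinearEquiv.ofFinrankEq _ _ (by simp [finrank_zero_of_subsingleton])
  exact ⟨_, _, _, inferInstance, Φ, fun a ↦ (nonempty_logSVD_of_injective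
    (Function.injective_of_subsingleton _)).some, Subsingleton.elim _ _⟩

lemma of_irreducible [FiniteDimensional ℂ V] (hs : ∀ a, Function.Injective (s a))
    (hirr : ∀ L : Submodule ℂ V, (∀ a, ∀ v ∈ L, s a v ∈ L) → L = ⊥ ∨ L = ⊤) :
    HasBalancedMetric s := by
  rcases subsingleton_or_nontrivial V with hV | hV
  · exact of_subsingleton
  let φ : V ≃ₗ[ℂ] EuclideanSpace ℂ (Fin (finrank ℂ V)) := LinearEquiv.ofFinrankEq _ _ (by simp)
  have := φ.symm.toEquiv.nontrivial
  have hunit (a : κ) : IsUnit (LinearMap.toContinuousLinearMap (φ.conj (s a))) := by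
    have hinj : Function.Injective (φ.conj (s a)) :=
      (φ.injective.comp (hs a)).comp φ.symm.injective
    exact ContinuousLinearMap.isUnit_iff_bijective.2
      ⟨hinj, LinearMap.injective_iff_surjective.1 hinj⟩
  obtain ⟨h, hh, hbal⟩ := exists_isLogBalanced_conj hunit fun L hL ↦ by
    have hcomap := hirr (L.comap (φ : V →ₗ[ℂ] _)) fun a v hv ↦ by
      simpa [LinearEquiv.conj_apply] using hL a (φ v) hv
    rw [← Submodule.map_comap_eq_of_surjective (f := (φ : V →ₗ[ℂ] _)) φ.surjective L]
    exact hcomap.imp (by rintro h; simp [h]) (by rintro h; simp [h])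
  obtain ⟨u, rfl⟩ := hh
  refine ⟨_, _, _, inferInstance,
    φ.trans (ContinuousLinearEquiv.unitsEquiv ℂ _ u).toLinearEquiv, ?_⟩
  simp only [Ring.inverse_unit] at hbal
  exact hbal

end HasBalancedMetric

theorem IsSemisimpleFamily.hasBalancedMetric [FiniteDimensional ℂ V] (hs : IsSemisimpleFamily s)
    (hinj : ∀ a, Function.Injective (s a)) : HasBalancedMetric s := by
  induction hn : finrank ℂ V using Nat.strong_induction_on generalizing V with
  | h n ih =>
  by_cases hirr : ∀ L : Submodule ℂ V, (∀ a, ∀ v ∈ L, s a v ∈ L) → L = ⊥ ∨ L = ⊤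
  · exact .of_irreducible hinj hirr
  push Not at hirr
  obtain ⟨L, hL, hbot, htop⟩ := hirr
  obtain ⟨L', hL', hc⟩ := hs L hL
  have htop' : L' ≠ ⊤ := fun h ↦ hbot (by simpa [h] using hc.disjoint)
  have restrict_balanced {M : Submodule ℂ V} (hM : ∀ a, ∀ v ∈ M, s a v ∈ M) (hne : M ≠ ⊤) :
      HasBalancedMetric fun a ↦ (s a).restrict (hM a) :=
    ih _ (hn ▸ Submodule.finrank_lt hne) (hs.restrict hM)
      (fun a v w h ↦ Subtype.ext (hinj a (congrArg Subtype.val h))) rfl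
  refine .of_conj (L.prodEquivOfIsCompl L' hc).symm ?_
  convert (restrict_balanced hL htop).prod (restrict_balanced hL' htop') using 2 with a
  refine LinearMap.ext fun x ↦ (L.prodEquivOfIsCompl L' hc).injective ?_
  simp only [LinearEquiv.conj_apply_apply, LinearEquiv.symm_symm, LinearEquiv.apply_symm_apply,
    Submodule.coe_prodEquivOfIsCompl', map_add, LinearMap.prodMap_apply,
    LinearMap.coe_restrict_apply]

end BalancedMetric

section Complex

variable {G V W : Type*} [Group G] [AddCommGroup V] [Module ℂ V] [FiniteDimensional ℂ V]
  [AddCommGroup W] [Module ℂ W] [FiniteDimensional ℂ W]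

theorem isSemisimpleModule_tprod_complex (ρ : Representation ℂ G V) (σ : Representation ℂ G W)
    (hρ : IsSemisimpleModule (MonoidAlgebra ℂ G) ρ.asModule)
    (hσ : IsSemisimpleModule (MonoidAlgebra ℂ G) σ.asModule) :
    IsSemisimpleModule (MonoidAlgebra ℂ G) (ρ.tprod σ).asModule := by
  obtain ⟨S, ⟨hSρ, hSσ⟩, hST⟩ := (((eventually_span_image_eq (K := ℂ) ρ).and
    (eventually_span_image_eq (K := ℂ) σ)).and
    (eventually_span_image_eq (K := ℂ) (ρ.tprod σ))).exists
  rw [Set.image_eq_range] at hSρ hSσ hST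
  rw [isSemisimpleModule_asModule_iff] at hρ hσ ⊢
  rw [← isSemisimpleFamily_congr hSρ] at hρ
  rw [← isSemisimpleFamily_congr hSσ] at hσ
  rw [← isSemisimpleFamily_congr hST]
  exact ((hρ.hasBalancedMetric fun g ↦ (ρ.apply_bijective g).injective).tensor
    (hσ.hasBalancedMetric fun g ↦ (σ.apply_bijective g).injective)).isSemisimpleFamily

end Complex

section TraceForm

variable {K Γ A B V : Type*} [Field K] [Ring A] [Algebra K A] [Ring B] [Algebra K B]
  [AddCommGroup V] [Module K V]

/-- The form `(x, y) ↦ τ (x * y)` is nondegenerate on the span of the family `f`. In the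
applications `τ` is the trace on an algebra of endomorphisms or of matrices. -/
def HasNondegenerateTraceForm (τ : A →ₗ[K] K) (f : Γ → A) : Prop :=
  ∀ a ∈ Submodule.span K (Set.range f), (∀ g, τ (a * f g) = 0) → a = 0

lemma hasNondegenerateTraceForm_iff {τ : A →ₗ[K] K} {f : Γ → A} :
    HasNondegenerateTraceForm τ f ↔ ∀ c : Γ →₀ K,
      (∀ g, Finsupp.linearCombination K (fun h ↦ τ (f h * f g)) c = 0) →
        Finsupp.linearCombination K f c = 0 := by
  have trace_mul (g : Γ) (c : Γ →₀ K) : Finsupp.linearCombination K (fun h ↦ τ (f h * f g)) c =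
      τ (Finsupp.linearCombination K f c * f g) := by
    simp [Finsupp.linearCombination_apply, Finsupp.sum, Finset.sum_mul]
  simp only [HasNondegenerateTraceForm, ← Finsupp.range_linearCombination, LinearMap.mem_range,
    forall_exists_index, forall_apply_eq_imp_iff, trace_mul]

lemma hasNondegenerateTraceForm_comp_algEquiv (e : A ≃ₐ[K] B) {τ : B →ₗ[K] K} {f : Γ → A} :
    HasNondegenerateTraceForm (τ ∘ₗ e.toLinearMap) f ↔ HasNondegenerateTraceForm τ (e ∘ f) := by
  have map_lc (c : Γ →₀ K) : Finsupp.linearCombination K (e ∘ f) c =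
      e (Finsupp.linearCombination K f c) := by
    simp [Finsupp.linearCombination_apply, map_finsuppSum]
  simp [hasNondegenerateTraceForm_iff, map_lc]

lemma eq_zero_of_forall_trace_mul_eq_zero [CharZero K] [FiniteDimensional K V]
    (A : Subalgebra K (End K V)) [IsSemisimpleModule A V] {a : End K V} (ha : a ∈ A)
    (hab : ∀ b ∈ A, LinearMap.trace K V (a * b) = 0) : a = 0 := by
  have : IsArtinianRing A := IsArtinianRing.of_finite K A
  have jacobson_eq_bot : Ring.jacobson A = ⊥ := by
    refine eq_bot_iff.2 fun x hx ↦ Subtype.ext (LinearMap.ext fun v ↦ ?_)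
    exact Module.mem_annihilator.1 (IsSemisimpleModule.jacobson_le_annihilator A V hx) v
  have : IsSemisimpleRing A := IsArtinianRing.isSemisimpleRing_iff_jacobson.2 jacobson_eq_bot
  let N : Ideal A :=
    { carrier := {x | ∀ b ∈ A, LinearMap.trace K V (x * b) = 0}
      add_mem' := fun hx hy b hb ↦ by simp [add_mul, hx b hb, hy b hb]
      zero_mem' := fun b _ ↦ by simp
      smul_mem' := fun c x hx b hb ↦ by
        simpa [mul_assoc, LinearMap.trace_mul_comm K c.1] using hx _ (A.mul_mem hb c.2) }
  obtain ⟨e, he, hN⟩ := IsSemisimpleRing.ideal_eq_span_idempotent N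
  have heN : e ∈ N := hN ▸ Ideal.subset_span rfl
  have e_eq_zero : e = 0 := Subtype.ext <|
    LinearMap.IsIdempotentElem.eq_zero_of_trace_eq_zero (congrArg Subtype.val he)
      (by simpa using heN 1 A.one_mem)
  have haN : (⟨a, ha⟩ : A) ∈ N := hab
  exact congrArg Subtype.val (show (⟨a, ha⟩ : A) = 0 by simpa [hN, e_eq_zero] using haN)

lemma isSemisimpleModule_of_forall_trace_mul_eq_zero [FiniteDimensional K V]
    (A : Subalgebra K (End K V))
    (h : ∀ a ∈ A, (∀ b ∈ A, LinearMap.trace K V (a * b) = 0) → a = 0) :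
    IsSemisimpleModule A V := by
  have : IsArtinianRing A := IsArtinianRing.of_finite K A
  obtain ⟨n, hn⟩ := IsArtinianRing.isNilpotent_jacobson_bot (R := A)
  rw [Ideal.jacobson_bot] at hn
  have isNilpotent_of_mem {x : A} (hx : x ∈ Ring.jacobson A) : IsNilpotent (x : End K V) :=
    ⟨n, congrArg Subtype.val (show x ^ n = 0 by simpa [hn] using Ideal.pow_mem_pow hx n)⟩
  have jacobson_eq_bot : Ring.jacobson A = ⊥ := by
    refine eq_bot_iff.2 fun x hx ↦ Subtype.ext (h x x.2 fun b hb ↦ ?_)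
    rw [LinearMap.trace_mul_comm]
    exact (LinearMap.isNilpotent_trace_of_isNilpotent
      (isNilpotent_of_mem (Ideal.mul_mem_left _ ⟨b, hb⟩ hx))).eq_zero
  have : IsSemisimpleRing A := IsArtinianRing.isSemisimpleRing_iff_jacobson.2 jacobson_eq_bot
  infer_instance

end TraceForm

section GroupAlgebraImage

variable {K G V : Type*} [Field K] [Monoid G] [AddCommGroup V] [Module K V]
  (ρ : Representation K G V)

lemma toSubmodule_range_asAlgebraHom :
    Subalgebra.toSubmodule ρ.asAlgebraHom.range = Submodule.span K (Set.range ρ) := by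
  ext f
  rw [Finsupp.mem_span_range_iff_exists_finsupp]
  simp only [Representation.asAlgebraHom_def, Subalgebra.mem_toSubmodule, AlgHom.mem_range,
    MonoidAlgebra.lift_apply]
  exact ⟨fun ⟨a, ha⟩ ↦ ⟨a.coeff, ha⟩, fun ⟨c, hc⟩ ↦ ⟨.ofCoeff c, hc⟩⟩

lemma isSemisimpleModule_range_asAlgebraHom_iff :
    IsSemisimpleModule ρ.asAlgebraHom.range V ↔
      IsSemisimpleModule (MonoidAlgebra K G) ρ.asModule := by
  let σ : MonoidAlgebra K G →+* ρ.asAlgebraHom.range := ρ.asAlgebraHom.rangeRestrict.toRingHom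
  have : RingHomSurjective σ := ⟨ρ.asAlgebraHom.rangeRestrict_surjective⟩
  let l : ρ.asModule →ₛₗ[σ] V :=
    { toFun := ρ.asModuleEquiv
      map_add' := map_add _
      map_smul' := ρ.asModuleEquiv_map_smul }
  exact (l.isSemisimpleModule_iff_of_bijective ρ.asModuleEquiv.bijective).symm

theorem isSemisimpleModule_iff_hasNondegenerateTraceForm [CharZero K] [FiniteDimensional K V] :
    IsSemisimpleModule (MonoidAlgebra K G) ρ.asModule ↔
      HasNondegenerateTraceForm (LinearMap.trace K V) ρ := by
  have mem_range {a : End K V} :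
      a ∈ Submodule.span K (Set.range ρ) ↔ a ∈ ρ.asAlgebraHom.range := by
    rw [← toSubmodule_range_asAlgebraHom, Subalgebra.mem_toSubmodule]
  have apply_mem (g : G) : ρ g ∈ ρ.asAlgebraHom.range :=
    mem_range.1 (Submodule.subset_span (Set.mem_range_self g))
  rw [← isSemisimpleModule_range_asAlgebraHom_iff]
  refine ⟨fun h a ha hab ↦ ?_, fun h ↦ isSemisimpleModule_of_forall_trace_mul_eq_zero _
    fun a ha hab ↦ h a (mem_range.2 ha) fun g ↦ hab _ (apply_mem g)⟩
  refine eq_zero_of_forall_trace_mul_eq_zero ρ.asAlgebraHom.range (mem_range.1 ha) fun b hb ↦ ?_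
  rw [← mem_range] at hb
  induction hb using Submodule.span_induction with
  | mem b hb => obtain ⟨g, rfl⟩ := hb; exact hab g
  | zero => simp
  | add b c _ _ hb hc => rw [mul_add, map_add, hb, hc, add_zero]
  | smul r b _ hb => rw [mul_smul_comm, map_smul, hb, smul_zero]

end GroupAlgebraImage

section ScalarExtension

variable {k K Γ ι n : Type*} [Field k] [Field K] [Fintype n] [DecidableEq n]

lemma forall_linearCombination_eq_zero_imp_map_iff (φ : k →+* K) (p : ι → Γ → k) (q : Γ → k) :
    (∀ c : Γ →₀ K, (∀ i, Finsupp.linearCombination K (φ ∘ p i) c = 0) →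
        Finsupp.linearCombination K (φ ∘ q) c = 0) ↔
      ∀ c : Γ →₀ k, (∀ i, Finsupp.linearCombination k (p i) c = 0) →
        Finsupp.linearCombination k q c = 0 := by
  let := φ.toAlgebra
  constructor <;> intro h c hc
  · have extend (r : Γ → k) : Finsupp.linearCombination K (φ ∘ r) (c.mapRange φ (map_zero φ)) =
        φ (Finsupp.linearCombination k r c) := by
      simp [Finsupp.linearCombination_apply, Finsupp.sum_mapRange_index, map_finsuppSum]
    exact φ.injective (by rw [← extend, h _ fun i ↦ by rw [extend, hc, map_zero], map_zero])
  · have restrict (l : K →ₗ[k] k) (r : Γ → k) : Finsupp.linearCombination k r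
        (c.mapRange l (map_zero l)) = l (Finsupp.linearCombination K (φ ∘ r) c) := by
      simp only [Finsupp.linearCombination_apply, map_finsuppSum]
      rw [Finsupp.sum_mapRange_index (by simp)]
      refine Finsupp.sum_congr fun g _ ↦ ?_
      rw [smul_eq_mul, smul_eq_mul, mul_comm, Function.comp_apply, mul_comm (c g), ← smul_eq_mul,
        ← map_smul]
      rfl
    refine (Basis.ofVectorSpace k K).ext_elem fun b ↦ ?_
    simpa using (restrict ((Basis.ofVectorSpace k K).coord b) q).symm.trans <|
      h _ fun i ↦ by rw [restrict, hc, map_zero]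

lemma hasNondegenerateTraceForm_matrix_iff {T : Γ → Matrix n n k} :
    HasNondegenerateTraceForm (Matrix.traceLinearMap n k k) T ↔ ∀ (ij : n × n) (c : Γ →₀ k),
      (∀ g, Finsupp.linearCombination k (fun h ↦ (T h * T g).trace) c = 0) →
        Finsupp.linearCombination k (fun h ↦ T h ij.1 ij.2) c = 0 := by
  rw [hasNondegenerateTraceForm_iff, forall_comm]
  refine forall_congr' fun c ↦ ?_
  rw [forall_comm]
  refine imp_congr_right fun _ ↦ ?_
  simp [← Matrix.ext_iff, Finsupp.linearCombination_apply, Finsupp.sum, Matrix.sum_apply]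

lemma hasNondegenerateTraceForm_matrix_map_iff (φ : k →+* K) (T : Γ → Matrix n n k) :
    HasNondegenerateTraceForm (Matrix.traceLinearMap n K K) (fun g ↦ (T g).map φ) ↔
      HasNondegenerateTraceForm (Matrix.traceLinearMap n k k) T := by
  have trace_map (g h : Γ) : ((T h).map φ * (T g).map φ).trace = φ (T h * T g).trace := by
    rw [← Matrix.map_mul, AddMonoidHom.map_trace]
  rw [hasNondegenerateTraceForm_matrix_iff, hasNondegenerateTraceForm_matrix_iff]
  simp only [trace_map, Matrix.map_apply]
  exact forall_congr' fun ij ↦ forall_linearCombination_eq_zero_imp_map_iff φ _ _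

end ScalarExtension

section Kronecker

variable {K G m n : Type*} [Field K] [Group G] [Fintype m] [DecidableEq m] [Fintype n]
  [DecidableEq n]

lemma isSemisimpleModule_iff_matrix {G V : Type*} [CharZero K] [Monoid G] [AddCommGroup V]
    [Module K V] (b : Basis n K V) (ρ : Representation K G V) :
    IsSemisimpleModule (MonoidAlgebra K G) ρ.asModule ↔
      HasNondegenerateTraceForm (Matrix.traceLinearMap n K K)
        (fun g ↦ LinearMap.toMatrix b b (ρ g)) := by
  have := b.finiteDimensional_of_finite
  rw [isSemisimpleModule_iff_hasNondegenerateTraceForm]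
  have trace_eq : LinearMap.trace K V =
      Matrix.traceLinearMap n K K ∘ₗ (LinearMap.toMatrixAlgEquiv b).toLinearMap :=
    LinearMap.ext (LinearMap.trace_eq_matrix_trace K b)
  rw [trace_eq]
  exact hasNondegenerateTraceForm_comp_algEquiv (LinearMap.toMatrixAlgEquiv b)

lemma hasNondegenerateTraceForm_kronecker_complex {M : G →* Matrix m m ℂ}
    {N : G →* Matrix n n ℂ} (hM : HasNondegenerateTraceForm (Matrix.traceLinearMap m ℂ ℂ) M)
    (hN : HasNondegenerateTraceForm (Matrix.traceLinearMap n ℂ ℂ) N) :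
    HasNondegenerateTraceForm (Matrix.traceLinearMap (m × n) ℂ ℂ) fun g ↦ M g ⊗ₖ N g := by
  let ρ : Representation ℂ G (m → ℂ) :=
    (Matrix.toLinAlgEquiv' : Matrix m m ℂ ≃ₐ[ℂ] _).toMulEquiv.toMonoidHom.comp M
  let σ : Representation ℂ G (n → ℂ) :=
    (Matrix.toLinAlgEquiv' : Matrix n n ℂ ≃ₐ[ℂ] _).toMulEquiv.toMonoidHom.comp N
  have toMatrix_ρ (g : G) : LinearMap.toMatrix (Pi.basisFun ℂ m) (Pi.basisFun ℂ m) (ρ g) = M g :=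
    LinearMap.toMatrix'_toLin' (M g)
  have toMatrix_σ (g : G) : LinearMap.toMatrix (Pi.basisFun ℂ n) (Pi.basisFun ℂ n) (σ g) = N g :=
    LinearMap.toMatrix'_toLin' (N g)
  have hρ := (isSemisimpleModule_iff_matrix (Pi.basisFun ℂ m) ρ).2 (by simpa only [toMatrix_ρ])
  have hσ := (isSemisimpleModule_iff_matrix (Pi.basisFun ℂ n) σ).2 (by simpa only [toMatrix_σ])
  have hρσ := isSemisimpleModule_tprod_complex ρ σ hρ hσ
  rw [isSemisimpleModule_iff_matrix ((Pi.basisFun ℂ m).tensorProduct (Pi.basisFun ℂ n))] at hρσ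
  simpa only [Representation.tprod_apply, TensorProduct.toMatrix_map, toMatrix_ρ, toMatrix_σ]
    using hρσ

lemma hasNondegenerateTraceForm_kronecker_of_ringHom (φ : K →+* ℂ) {M : G →* Matrix m m K}
    {N : G →* Matrix n n K} (hM : HasNondegenerateTraceForm (Matrix.traceLinearMap m K K) M)
    (hN : HasNondegenerateTraceForm (Matrix.traceLinearMap n K K) N) :
    HasNondegenerateTraceForm (Matrix.traceLinearMap (m × n) K K) fun g ↦ M g ⊗ₖ N g := by
  rw [← hasNondegenerateTraceForm_matrix_map_iff φ] at hM hN ⊢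
  have hMN := hasNondegenerateTraceForm_kronecker_complex
    (M := φ.mapMatrix.toMonoidHom.comp M) (N := φ.mapMatrix.toMonoidHom.comp N) hM hN
  convert hMN using 2 with g
  ext
  simp

lemma exists_monoidHom_matrix_subfield {G : Type*} [Monoid G] (F : Subfield K)
    (M : G →* Matrix n n K) (hM : ∀ g i j, M g i j ∈ F) :
    ∃ M₀ : G →* Matrix n n F, ⇑M = fun g ↦ (M₀ g).map F.subtype := by
  have map_injective : Function.Injective (F.subtype.mapMatrix (m := n)) :=
    Matrix.map_injective F.subtype.injective
  let M₀ (g : G) : Matrix n n F := .of fun i j ↦ ⟨M g i j, hM g i j⟩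
  have map_M₀ (g : G) : F.subtype.mapMatrix (M₀ g) = M g := rfl
  exact ⟨⟨⟨M₀, map_injective (by simp only [map_M₀, map_one])⟩,
    fun g h ↦ map_injective (by simp only [map_M₀, map_mul])⟩, rfl⟩

open Cardinal in
lemma nonempty_ringHom_of_isAlgClosed {F L : Type*} [Field F] [CharZero F] [Countable F] [Field L]
    [CharZero L] [IsAlgClosed L] [Uncountable L] : Nonempty (F →+* L) := by
  obtain ⟨s, hs⟩ := exists_isTranscendenceBasis ℤ F
  obtain ⟨t, ht⟩ := exists_isTranscendenceBasis ℤ L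
  have mk_eq : #L = #t := by
    simpa using IsAlgClosed.cardinal_eq_cardinal_transcendence_basis_of_aleph0_lt _ ht mk_int.le
      aleph0_lt_mk
  obtain ⟨i⟩ : Nonempty (s ↪ t) := by
    rw [← lift_mk_le', ← mk_eq]
    exact (lift_le_aleph0.2 mk_le_aleph0).trans (aleph0_le_lift.2 aleph0_lt_mk.le)
  have aeval_injective : Function.Injective (MvPolynomial.aeval fun x ↦ (i x : L)) :=
    (ht.1.comp i i.injective :)
  let φ : Algebra.adjoin ℤ (Set.range ((↑) : s → F)) →+* L :=
    (MvPolynomial.aeval fun x ↦ (i x : L)).toRingHom.comp hs.1.aevalEquiv.symm.toRingHom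
  let := φ.toAlgebra
  have := Module.isTorsionFree_iff_algebraMap_injective.2
    (show Function.Injective φ from aeval_injective.comp hs.1.aevalEquiv.symm.injective)
  have := hs.isAlgebraic
  exact ⟨(IsAlgClosed.lift : F →ₐ[Algebra.adjoin ℤ (Set.range ((↑) : s → F))] L).toRingHom⟩

lemma hasNondegenerateTraceForm_kronecker [CharZero K] [Countable G] {M : G →* Matrix m m K}
    {N : G →* Matrix n n K} (hM : HasNondegenerateTraceForm (Matrix.traceLinearMap m K K) M)
    (hN : HasNondegenerateTraceForm (Matrix.traceLinearMap n K K) N) :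
    HasNondegenerateTraceForm (Matrix.traceLinearMap (m × n) K K) fun g ↦ M g ⊗ₖ N g := by
  let entries : Set K := Set.range (fun x : G × m × m ↦ M x.1 x.2.1 x.2.2) ∪
    Set.range (fun x : G × n × n ↦ N x.1 x.2.1 x.2.2)
  let F := Subfield.closure entries
  have : Countable F := Cardinal.mk_le_aleph0_iff.1 <|
    (Subfield.cardinalMk_closure_le_max entries).trans <| max_le
      ((Set.countable_range _).union (Set.countable_range _)).le_aleph0 le_rfl
  have : Uncountable ℂ := Cardinal.aleph0_lt_mk_iff.1 (by simp [Cardinal.aleph0_lt_continuum])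
  obtain ⟨φ⟩ := nonempty_ringHom_of_isAlgClosed (F := F) (L := ℂ)
  obtain ⟨M₀, hM₀⟩ := exists_monoidHom_matrix_subfield F M fun g i j ↦
    Subfield.subset_closure (.inl ⟨(g, i, j), rfl⟩)
  obtain ⟨N₀, hN₀⟩ := exists_monoidHom_matrix_subfield F N fun g i j ↦
    Subfield.subset_closure (.inr ⟨(g, i, j), rfl⟩)
  rw [hM₀, hasNondegenerateTraceForm_matrix_map_iff] at hM
  rw [hN₀, hasNondegenerateTraceForm_matrix_map_iff] at hN
  have hMN := (hasNondegenerateTraceForm_matrix_map_iff F.subtype _).2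
    (hasNondegenerateTraceForm_kronecker_of_ringHom φ hM hN)
  convert hMN using 2 with g
  rw [hM₀, hN₀]
  ext
  simp

end Kronecker

section Descent

variable {K G V W : Type*} [Field K] [Group G] [AddCommGroup V] [Module K V] [AddCommGroup W]
  [Module K W]

theorem isSemisimpleModule_tprod_of_countable [CharZero K] [FiniteDimensional K V]
    [FiniteDimensional K W] [Countable G] {ρ : Representation K G V} {σ : Representation K G W}
    (hρ : IsSemisimpleModule (MonoidAlgebra K G) ρ.asModule)
    (hσ : IsSemisimpleModule (MonoidAlgebra K G) σ.asModule) :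
    IsSemisimpleModule (MonoidAlgebra K G) (ρ.tprod σ).asModule := by
  let b := finBasis K V
  let c := finBasis K W
  rw [isSemisimpleModule_iff_matrix b] at hρ
  rw [isSemisimpleModule_iff_matrix c] at hσ
  rw [isSemisimpleModule_iff_matrix (b.tensorProduct c)]
  simp only [Representation.tprod_apply, TensorProduct.toMatrix_map]
  exact hasNondegenerateTraceForm_kronecker
    (M := (LinearMap.toMatrixAlgEquiv b).toMulEquiv.toMonoidHom.comp ρ)
    (N := (LinearMap.toMatrixAlgEquiv c).toMulEquiv.toMonoidHom.comp σ) hρ hσ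

lemma isSemisimpleModule_comp_iff {G Γ : Type*} [Monoid G] [Monoid Γ]
    (ρ : Representation K G V) (θ : Γ →* G)
    {S : Set G} (hS : Submodule.span K (ρ '' S) = Submodule.span K (Set.range ρ))
    (hθ : S ⊆ Set.range θ) :
    IsSemisimpleModule (MonoidAlgebra K Γ) (Representation.asModule (ρ.comp θ)) ↔
      IsSemisimpleModule (MonoidAlgebra K G) ρ.asModule := by
  rw [isSemisimpleModule_asModule_iff, isSemisimpleModule_asModule_iff]
  refine isSemisimpleFamily_congr (le_antisymm (Submodule.span_mono ?_) ?_)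
  · exact Set.range_comp_subset_range θ ρ
  · rw [← hS]
    refine Submodule.span_mono ?_
    rw [MonoidHom.coe_comp, Set.range_comp]
    exact Set.image_mono hθ

end Descent

end Chevalley

/-- Chevalley: over a field of characteristic zero, the tensor product of
two finite-dimensional semisimple representations of a group is semisimple. -/
theorem tensor_semisimple_of_semisimple
    {k G V W : Type*} [Field k] [CharZero k] [Group G]
    [AddCommGroup V] [Module k V] [AddCommGroup W] [Module k W]
    [FiniteDimensional k V] [FiniteDimensional k W]
    (ρV : Representation k G V) (ρW : Representation k G W)
    (hV : IsSemisimpleModule (MonoidAlgebra k G) ρV.asModule)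
    (hW : IsSemisimpleModule (MonoidAlgebra k G) ρW.asModule) :
    IsSemisimpleModule (MonoidAlgebra k G) (ρV.tprod ρW).asModule := by
  classical
  obtain ⟨S, ⟨hSV, hSW⟩, hSVW⟩ := (((Chevalley.eventually_span_image_eq (K := k) ρV).and
    (Chevalley.eventually_span_image_eq (K := k) ρW)).and
    (Chevalley.eventually_span_image_eq (K := k) (ρV.tprod ρW))).exists
  let θ : FreeGroup S →* G := FreeGroup.lift (↑)
  have hθ : (S : Set G) ⊆ Set.range θ := fun s hs ↦ ⟨.of ⟨s, hs⟩, FreeGroup.lift_apply_of⟩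
  have tprod_comp : (ρV.tprod ρW).comp θ = Representation.tprod (ρV.comp θ) (ρW.comp θ) :=
    MonoidHom.ext fun _ ↦ rfl
  rw [← Chevalley.isSemisimpleModule_comp_iff _ θ hSVW hθ, tprod_comp]
  exact Chevalley.isSemisimpleModule_tprod_of_countable
    ((Chevalley.isSemisimpleModule_comp_iff ρV θ hSV hθ).2 hV)
    ((Chevalley.isSemisimpleModule_comp_iff ρW θ hSW hθ).2 hW)
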